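/- (Integral Bailey lemma) Let p, q be complex numbers with 0 < |p| < 1, 0 < |q| < 1, fix a square root √(pq), and let s, t, y, w be nonzero complex numbers with |t| < 1, |s| < 1, |√(pq)(st)^{−1}y| < 1, |√(pq)(st)^{−1}y^{−1}| < 1, |sw| < 1, |sw^{−1}| < 1, |stw| < 1, |stw^{−1}| < 1. Let α : ℂ → ℂ be continuous on the unit circle, and define β(x) := ((p;p)_∞(q;q)_∞/(4πi)) ∮_{|z|=1} [Γ(t x^{±1} z^{±1};p,q)/(Γ(t²;p,q)·Γ(z²;p,q)Γ(z^{−2};p,q))] α(z) dz/z for x on the unit circle, and α′(z) := D(s;y,z)·α(z). Then D(t^{−1};y,w) · ((p;p)_∞(q;q)_∞/(4πi)) ∮_{|x|=1} [Γ(s w^{±1} x^{±1};p,q)/(Γ(s²;p,q)·Γ(x²;p,q)Γ(x^{−2};p,q))] · D(st;y,x) · β(x) dx/x = ((p;p)_∞(q;q)_∞/(4πi)) ∮_{|z|=1} [Γ(st w^{±1} z^{±1};p,q)/(Γ(s²t²;p,q)·Γ(z²;p,q)Γ(z^{−2};p,q))] α′(z) dz/z, where Γ(a u^{±1} v^{±1};p,q)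 denotes the product of the four elliptic gamma functions with all sign choices and all integrals are over the positively oriented unit circle. -/

import Mathlib

open Complex Real Filter Topology

/-- The infinite q-Pochhammer symbol (z;q)_inf. -/
noncomputable def qpoch (z q : ℂ) : ℂ := ∏' j : ℕ, (1 - z * q ^ j)

/-- The elliptic gamma function Γ(z;p,q). -/
noncomputable def egamma (z p q : ℂ) : ℂ :=
  ∏' jk : ℕ × ℕ, (1 - z⁻¹ * p ^ (jk.1 + 1) * q ^ (jk.2 + 1)) / (1 - z * p ^ jk.1 * q ^ jk.2)

/-- The short Jacobi theta function θ(z;p) (base first argument). -/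
noncomputable def theta (p z : ℂ) : ℂ := qpoch z p * qpoch (p * z⁻¹) p

/-- D(s;y,w) built from four elliptic gamma functions; `r` is a fixed square root of `p*q`. -/
noncomputable def Dfun (p q r s y w : ℂ) : ℂ :=
  egamma (r * s⁻¹ * y * w) p q * egamma (r * s⁻¹ * y * w⁻¹) p q *
    egamma (r * s⁻¹ * y⁻¹ * w) p q * egamma (r * s⁻¹ * y⁻¹ * w⁻¹) p q

/-- Γ(a u^{±1} v^{±1};p,q): the product of the four elliptic gamma functions. -/
noncomputable def gamma4 (p q a u v : ℂ) : ℂ :=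
  egamma (a * u * v) p q * egamma (a * u * v⁻¹) p q *
    egamma (a * u⁻¹ * v) p q * egamma (a * u⁻¹ * v⁻¹) p q

/-- The constant κ = (p;p)_∞ (q;q)_∞ / (4πi). -/
noncomputable def kappa (p q : ℂ) : ℂ := qpoch p p * qpoch q q / (4 * (Real.pi : ℂ) * Complex.I)


/-! ## Entire products -/

noncomputable def EP {ι : Type} (a : ι → ℂ) (z : ℂ) : ℂ := ∏' i, (1 - z * a i)

lemma EP_multipliable {ι : Type} {a : ι → ℂ} (ha : Summable fun i => ‖a i‖) (z : ℂ) :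
    Multipliable fun i => (1 - z * a i) := by
  have := multipliable_one_add_of_summable (f := fun i => -(z * a i)) (by
    simpa using ha.mul_left ‖z‖)
  simpa [sub_eq_add_neg] using this

lemma EP_ne_zero {ι : Type} {a : ι → ℂ} (ha : Summable fun i => ‖a i‖) {z : ℂ}
    (h : ∀ i, 1 - z * a i ≠ 0) : EP a z ≠ 0 := by
  have := tprod_one_add_ne_zero_of_summable (f := fun i => -(z * a i))
    (by simpa [sub_eq_add_neg] using h) (by simpa using ha.mul_left ‖z‖)
  simpa [EP, sub_eq_add_neg] using this

lemma EP_differentiable {ι : Type} {a : ι → ℂ} (ha : Summable fun i => ‖a i‖) :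
    Differentiable ℂ (EP a) := by
  intro z
  have h1 := Summable.hasProdLocallyUniformlyOn_one_add (f := fun i x => -(x * a i))
    (K := Metric.ball (0:ℂ) (‖z‖ + 1)) Metric.isOpen_ball
    (u := fun i => (‖z‖ + 1) * ‖a i‖) (ha.mul_left _)
    (Eventually.of_forall fun i x hx => by
      rw [norm_neg, norm_mul]
      have : ‖x‖ < ‖z‖ + 1 := by simpa using hx
      gcongr) (fun i => by fun_prop)
  have h2 : DifferentiableOn ℂ (fun x => ∏' i, (1 + -(x * a i))) (Metric.ball (0:ℂ) (‖z‖ + 1)) :=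
    h1.differentiableOn (.of_forall fun _ ↦ by
      simpa [Finset.prod_fn] using
        DifferentiableOn.finsetProd (fun _ _ ↦ by fun_prop)) Metric.isOpen_ball
  have h3 := h2.differentiableAt (x := z) (Metric.isOpen_ball.mem_nhds (by simp))
  have h4 : EP a = (fun x => ∏' i, (1 + -(x * a i))) := by
    ext x; simp [EP, sub_eq_add_neg]
  rw [h4]; exact h3

lemma sum_geo {q : ℂ} (hq : ‖q‖ < 1) : Summable fun j : ℕ => ‖q ^ j‖ := by
  simpa using summable_geometric_of_lt_one (norm_nonneg _) hq

lemma sum_geo2 {p q : ℂ} (hp : ‖p‖ < 1) (hq : ‖q‖ < 1) :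
    Summable fun j : ℕ × ℕ => ‖p ^ j.1 * q ^ j.2‖ := by
  have := (sum_geo hp).mul_of_nonneg (sum_geo hq) (fun _ => norm_nonneg _) (fun _ => norm_nonneg _)
  simpa using this

noncomputable def Phi (p q z : ℂ) : ℂ := EP (fun j : ℕ × ℕ => p ^ j.1 * q ^ j.2) z

lemma qpoch_eq (z q : ℂ) : qpoch z q = EP (fun j : ℕ => q ^ j) z := rfl

lemma qpoch_differentiable {q : ℂ} (hq : ‖q‖ < 1) : Differentiable ℂ (fun z => qpoch z q) :=
  EP_differentiable (sum_geo hq)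

lemma Phi_differentiable {p q : ℂ} (hp : ‖p‖ < 1) (hq : ‖q‖ < 1) : Differentiable ℂ (Phi p q) :=
  EP_differentiable (sum_geo2 hp hq)

lemma one_sub_ne_zero_of_norm_lt {x : ℂ} (h : ‖x‖ < 1) : 1 - x ≠ 0 := by
  intro h0
  have : x = 1 := by linear_combination -h0
  rw [this] at h; simp at h

lemma qpoch_ne_zero {z q : ℂ} (hq : ‖q‖ < 1) (h : ∀ j : ℕ, 1 - z * q ^ j ≠ 0) : qpoch z q ≠ 0 :=
  EP_ne_zero (sum_geo hq) h

lemma qpoch_ne_zero' {z q : ℂ} (hq : ‖q‖ < 1) (h : ‖z‖ < 1) : qpoch z q ≠ 0 := by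
  apply qpoch_ne_zero hq
  intro j
  apply one_sub_ne_zero_of_norm_lt
  rw [norm_mul, norm_pow]
  calc ‖z‖ * ‖q‖ ^ j ≤ ‖z‖ * 1 := by gcongr; exact pow_le_one₀ (norm_nonneg _) hq.le
    _ < 1 := by simpa

lemma Phi_ne_zero {p q z : ℂ} (hp : ‖p‖ < 1) (hq : ‖q‖ < 1) (h : ‖z‖ < 1) : Phi p q z ≠ 0 := by
  apply EP_ne_zero (sum_geo2 hp hq)
  intro j
  apply one_sub_ne_zero_of_norm_lt
  rw [norm_mul, norm_mul, norm_pow, norm_pow]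
  calc ‖z‖ * (‖p‖ ^ j.1 * ‖q‖ ^ j.2) ≤ ‖z‖ * (1 * 1) := by
        gcongr <;> exact pow_le_one₀ (norm_nonneg _) (by linarith)
    _ < 1 := by simpa

lemma qpoch_succ {z q : ℂ} (hq : ‖q‖ < 1) : qpoch z q = (1 - z) * qpoch (q * z) q := by
  unfold qpoch
  rw [tprod_eq_zero_mul']
  · simp only [pow_zero, mul_one]
    congr 1
    apply tprod_congr; intro j; rw [pow_succ]; ring
  · have := EP_multipliable (sum_geo hq) (q * z)
    refine this.congr ?_
    intro j; simp only [pow_succ]; ring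

lemma Phi_symm (p q z : ℂ) : Phi p q z = Phi q p z := by
  unfold Phi EP
  rw [← (Equiv.prodComm ℕ ℕ).tprod_eq]
  apply tprod_congr; intro j; simp [mul_comm]

lemma Phi_shift_p {p q z : ℂ} (hp : ‖p‖ < 1) (hq : ‖q‖ < 1) :
    Phi p q z = qpoch z q * Phi p q (p * z) := by
  have key : ∀ x : ℂ, HasProd (fun j : ℕ => qpoch (x * p ^ j) q) (Phi p q x) := by
    intro x
    refine HasProd.prod_fiberwise (EP_multipliable (sum_geo2 hp hq) x).hasProd ?_
    intro j
    have := (EP_multipliable (sum_geo hq) (x * p ^ j)).hasProd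
    convert this using 1
    · ext k; ring
    · rfl
  have h1 := (key (p * z))
  rw [← (key z).tprod_eq, ← h1.tprod_eq, tprod_eq_zero_mul']
  · simp only [pow_zero, mul_one]
    congr 1
    apply tprod_congr; intro j; congr 1; rw [pow_succ]; ring
  · refine h1.multipliable.congr ?_
    intro j; congr 1; rw [pow_succ]; ring

lemma Phi_shift_q {p q z : ℂ} (hp : ‖p‖ < 1) (hq : ‖q‖ < 1) :
    Phi p q z = qpoch z p * Phi p q (q * z) := by
  rw [Phi_symm, Phi_shift_p hq hp, Phi_symm]

lemma egamma_eq {p q z : ℂ} (hp : ‖p‖ < 1) (hq : ‖q‖ < 1)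
    (h : Phi p q z ≠ 0) : egamma z p q = Phi p q (p * q / z) / Phi p q z := by
  have h1 := EP_multipliable (sum_geo2 hp hq) (p * q / z)
  have h2 := EP_multipliable (sum_geo2 hp hq) z
  have := (h1.hasProd.div₀ h2.hasProd h).tprod_eq
  unfold egamma
  rw [← EP, ← EP] at this
  unfold Phi
  rw [← this]
  apply tprod_congr; intro j
  congr 1 <;> ring

lemma egamma_zero_of_pole {p q : ℂ} : egamma 1 p q = 0 := by
  unfold egamma
  apply tprod_of_exists_eq_zero
  exact ⟨(0,0), by simp⟩

lemma theta_differentiableAt {p z : ℂ} (hp : ‖p‖ < 1) (hz : z ≠ 0) :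
    DifferentiableAt ℂ (theta p) z := by
  unfold theta
  have h := qpoch_differentiable hp
  have h2 : DifferentiableAt ℂ (fun z : ℂ => p * z⁻¹) z := by fun_prop (disch := assumption)
  exact (h z).mul ((h _).comp z h2)

lemma theta_continuousOn {p : ℂ} (hp : ‖p‖ < 1) : ContinuousOn (theta p) {0}ᶜ :=
  fun _ hz => (theta_differentiableAt hp hz).continuousAt.continuousWithinAt

lemma theta_one {p : ℂ} (hp : ‖p‖ < 1) : theta p 1 = 0 := by
  rw [theta, qpoch_succ hp]; simp

lemma theta_shift {p z : ℂ} (hp : ‖p‖ < 1) (hp0 : p ≠ 0) (hz : z ≠ 0) :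
    theta p (p * z) = -z⁻¹ * theta p z := by
  unfold theta
  have e : p * (p * z)⁻¹ = z⁻¹ := by field_simp
  rw [e, qpoch_succ (z := z⁻¹) hp, qpoch_succ (z := z) hp]
  field_simp
  ring

lemma theta_inv {p z : ℂ} (hp : ‖p‖ < 1) (hz : z ≠ 0) :
    theta p z⁻¹ = -z⁻¹ * theta p z := by
  unfold theta
  rw [inv_inv, qpoch_succ (z := z⁻¹) hp, qpoch_succ (z := z) hp]
  field_simp
  ring

lemma theta_ne_zero {p z : ℂ} (hp : ‖p‖ < 1) (h1 : ‖p‖ < ‖z‖) (h2 : ‖z‖ < 1) :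
    theta p z ≠ 0 := by
  have : 0 < ‖z‖ := lt_of_le_of_lt (norm_nonneg _) h1
  refine mul_ne_zero (qpoch_ne_zero' hp h2) (qpoch_ne_zero' hp ?_)
  rw [norm_mul, norm_inv, ← div_eq_mul_inv, div_lt_one this]; exact h1

lemma egamma_shift {p q z : ℂ} (hp : ‖p‖ < 1) (hq : ‖q‖ < 1) (hq0 : q ≠ 0) (hz : z ≠ 0)
    (h : ‖z‖ < 1) : egamma (q * z) p q = theta p z * egamma z p q := by
  have hz' : ‖q * z‖ < 1 := by
    rw [norm_mul]; nlinarith [norm_nonneg q, norm_nonneg z]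
  have n1 := Phi_ne_zero hp hq h
  have n2 := Phi_ne_zero hp hq hz'
  rw [egamma_eq hp hq n1, egamma_eq hp hq n2]
  have e : p * q / (q * z) = p / z := by field_simp
  rw [e, Phi_shift_q (z := p / z) hp hq]
  rw [Phi_shift_q (z := z) hp hq] at n1 ⊢
  have : q * (p / z) = p * q / z := by ring
  rw [this, theta, ← div_eq_mul_inv]
  have n3 := left_ne_zero_of_mul n1
  field_simp

lemma egamma_refl {p q z : ℂ} (hp : ‖p‖ < 1) (hq : ‖q‖ < 1) (hp0 : p ≠ 0) (hq0 : q ≠ 0)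
    (h0 : ‖p * q‖ < ‖z‖) (h : ‖z‖ < 1) : egamma z p q * egamma (p * q / z) p q = 1 := by
  have hz : 0 < ‖z‖ := lt_of_le_of_lt (norm_nonneg _) h0
  have hz0 : z ≠ 0 := norm_pos_iff.1 hz
  have hpq : p * q ≠ 0 := mul_ne_zero hp0 hq0
  have h2 : ‖p * q / z‖ < 1 := by rw [norm_div, div_lt_one hz]; exact h0
  have n1 := Phi_ne_zero hp hq h
  have n2 := Phi_ne_zero hp hq h2
  rw [egamma_eq hp hq n1, egamma_eq hp hq n2]
  have : p * q / (p * q / z) = z := by rw [div_div_eq_mul_div, mul_div_cancel_left₀ _ hpq]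
  rw [this]; field_simp

lemma egamma_differentiableAt {p q z : ℂ} (hp : ‖p‖ < 1) (hq : ‖q‖ < 1) (hz : z ≠ 0)
    (h : ‖z‖ < 1) : DifferentiableAt ℂ (fun z => egamma z p q) z := by
  have hd := Phi_differentiable hp hq
  have h1 : DifferentiableAt ℂ (fun z => Phi p q (p * q / z) / Phi p q z) z := by
    have : DifferentiableAt ℂ (fun z => p * q / z) z := by fun_prop (disch := assumption)
    exact ((hd _).comp z this).div (hd z) (Phi_ne_zero hp hq h)
  refine h1.congr_of_eventuallyEq ?_
  have : ∀ᶠ x in 𝓝 z, ‖x‖ < 1 := continuous_norm.continuousAt.eventually_lt_const h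
  filter_upwards [this] with x hx
  exact egamma_eq hp hq (Phi_ne_zero hp hq hx)

/-- `1/(Γ(x)Γ(1/x)) = θ(x;p) θ(1/x;q)` on the unit circle. -/
lemma egamma_circle {p q x : ℂ} (hp : ‖p‖ < 1) (hq : ‖q‖ < 1) (hp0 : p ≠ 0) (hq0 : q ≠ 0)
    (hx : ‖x‖ = 1) :
    (egamma x p q * egamma x⁻¹ p q)⁻¹ = theta p x * theta q x⁻¹ := by
  have hx0 : x ≠ 0 := by rw [← norm_pos_iff, hx]; norm_num
  by_cases h1 : x = 1
  · rw [h1, egamma_zero_of_pole, theta_one hp]; simp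
  have ne : ∀ y : ℂ, y ≠ 1 → ‖y‖ = 1 → Phi p q y ≠ 0 := by
    intro y hy1 hy
    rw [Phi_shift_q hp hq]
    refine mul_ne_zero ?_ (Phi_ne_zero hp hq (by rw [norm_mul, hy, mul_one]; exact hq))
    rw [qpoch_succ hp]
    refine mul_ne_zero (sub_ne_zero.2 (Ne.symm hy1))
      (qpoch_ne_zero' hp (by rw [norm_mul, hy, mul_one]; exact hp))
  have hxi : ‖x⁻¹‖ = 1 := by rw [norm_inv, hx, inv_one]
  have hx1 : x⁻¹ ≠ 1 := by intro h; apply h1; rw [← inv_inv x, h, inv_one]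
  have n1 := ne x h1 hx
  have n2 := ne _ hx1 hxi
  have hpq : ‖p * q‖ < 1 := by rw [norm_mul]; nlinarith [norm_nonneg p, norm_nonneg q]
  have n3 : Phi p q (p * q * x) ≠ 0 :=
    Phi_ne_zero hp hq (by rw [norm_mul, hx, mul_one]; exact hpq)
  have n4 : Phi p q (p * q / x) ≠ 0 :=
    Phi_ne_zero hp hq (by rw [norm_div, hx, div_one]; exact hpq)
  rw [egamma_eq hp hq n1, egamma_eq hp hq n2]
  have e1 : Phi p q x = qpoch x p * (qpoch (q * x) q * Phi p q (p * q * x)) := by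
    rw [Phi_shift_q hp hq, Phi_shift_p hp hq, mul_assoc p]
  have e2 : Phi p q x⁻¹ = qpoch x⁻¹ q * (qpoch (p * x⁻¹) p * Phi p q (p * q / x)) := by
    rw [Phi_shift_p hp hq, Phi_shift_q (z := p * x⁻¹) hp hq]
    congr 3; field_simp
  have e3 : p * q / x⁻¹ = p * q * x := by field_simp
  rw [e3, theta, theta, inv_inv]
  rw [e1, e2]
  field_simp


/-! ## Circle averages -/

lemma cav_annulus {f : ℂ → ℂ} {r R : ℝ} (hr : 0 < r) (hrR : r ≤ R)
    (hf : ∀ z : ℂ, r ≤ ‖z‖ → ‖z‖ ≤ R → DifferentiableAt ℂ f z) :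
    circleAverage f 0 R = circleAverage f 0 r := by
  rw [circleAverage_eq_circleIntegral (by linarith), circleAverage_eq_circleIntegral (by linarith)]
  congr 1
  refine circleIntegral_sub_center_inv_smul_eq_of_differentiable_on_annulus_off_countable hr hrR
    Set.countable_empty ?_ ?_
  · rintro z ⟨h1, h2⟩
    refine (hf z ?_ ?_).continuousAt.continuousWithinAt
    · simpa using h2
    · simpa using h1
  · rintro z ⟨⟨h1, h2⟩, -⟩
    refine hf z ?_ ?_
    · have : r < ‖z‖ := by simpa using h2
      exact this.le
    · have : ‖z‖ < R := by simpa using h1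
      exact this.le

lemma cav_rot (f : ℂ → ℂ) (c : ℂ) :
    circleAverage (fun z => f (c * z)) 0 1 = circleAverage f 0 ‖c‖ := by
  rw [circleAverage_eq_integral_add (f := f) (c := 0) (R := ‖c‖) (Complex.arg c), circleAverage]
  congr 2
  ext u
  congr 1
  simp only [circleMap, zero_add, ofReal_one, one_mul, ofReal_add, add_mul, Complex.exp_add]
  conv_lhs => rw [← Complex.norm_mul_exp_arg_mul_I c]
  ring

/-- Shift lemma: `⟨f(cz)⟩ = ⟨f(z)⟩`. -/
lemma cav_shift_in {f : ℂ → ℂ} {c : ℂ} (hc0 : c ≠ 0) (hc : ‖c‖ ≤ 1)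
    (hf : ∀ z : ℂ, ‖c‖ ≤ ‖z‖ → ‖z‖ ≤ 1 → DifferentiableAt ℂ f z) :
    circleAverage (fun z => f (c * z)) 0 1 = circleAverage f 0 1 := by
  rw [cav_rot, ← cav_annulus (norm_pos_iff.2 hc0) hc hf]

lemma cav_shift_out {f : ℂ → ℂ} {c : ℂ} (hc : 1 ≤ ‖c‖)
    (hf : ∀ z : ℂ, 1 ≤ ‖z‖ → ‖z‖ ≤ ‖c‖ → DifferentiableAt ℂ f z) :
    circleAverage (fun z => f (c * z)) 0 1 = circleAverage f 0 1 := by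
  rw [cav_rot, ← cav_annulus one_pos hc hf]

lemma cav_const_mul (c : ℂ) (f : ℂ → ℂ) :
    circleAverage (fun z => c * f z) 0 1 = c * circleAverage f 0 1 := by
  have := circleAverage_fun_smul (a := c) (f := f) (c := 0) (R := 1)
  simpa using this

lemma cav_congr {f g : ℂ → ℂ} (h : ∀ z : ℂ, ‖z‖ = 1 → f z = g z) :
    circleAverage f 0 1 = circleAverage g 0 1 := by
  apply circleAverage_congr_sphere
  intro z hz
  apply h
  simpa using hz

lemma cav_integrable {f : ℂ → ℂ} (h : ∀ z : ℂ, ‖z‖ = 1 → ContinuousAt f z) :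
    CircleIntegrable f 0 1 := by
  apply ContinuousOn.circleIntegrable zero_le_one
  intro z hz
  exact (h z (by simpa using hz)).continuousWithinAt

/-! ## Degree two theta functions are determined by two Laurent coefficients -/

lemma circle_zero_of_coeffs {f : ℂ → ℂ} (hf : ∀ z : ℂ, ‖z‖ = 1 → ContinuousAt f z)
    (h : ∀ n : ℤ, circleAverage (fun z => z ^ (-n) * f z) 0 1 = 0) :
    ∀ z : ℂ, ‖z‖ = 1 → f z = 0 := by
  have : Fact (0 < 2 * π) := ⟨Real.two_pi_pos⟩
  have hcont : Continuous fun x : AddCircle (2 * π) => f (AddCircle.toCircle x : ℂ) := by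
    rw [continuous_iff_continuousAt]
    intro x
    refine ContinuousAt.comp (hf _ (Circle.norm_coe _)) ?_
    exact (continuous_subtype_val.comp AddCircle.continuous_toCircle).continuousAt
  let F : C(AddCircle (2 * π), ℂ) := ⟨_, hcont⟩
  have hco : ∀ n, fourierCoeff F n = 0 := by
    intro n
    rw [fourierCoeff_eq_intervalIntegral _ n 0]
    have h1 := h n
    rw [circleAverage] at h1
    rw [one_div, zero_add]
    rw [← h1]
    congr 2
    ext u
    rw [fourier_coe_apply]
    simp only [F, ContinuousMap.coe_mk, AddCircle.toCircle_apply_mk, smul_eq_mul, circleMap,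
      zero_add, ofReal_one, one_mul, Circle.coe_exp]
    have hpi : (π : ℂ) ≠ 0 := by exact_mod_cast Real.pi_ne_zero
    rw [← Complex.exp_int_mul]
    congr 2
    · push_cast; field_simp
    · congr 1; push_cast; field_simp
  intro z hz
  have hs := has_pointwise_sum_fourier_series_of_summable (f := F)
    (by rw [show fourierCoeff F = fun _ => 0 from funext hco]; exact summable_zero)
    ((Complex.arg z : ℝ) : AddCircle (2 * π))
  simp only [hco, zero_smul] at hs
  have := hs.unique hasSum_zero
  have h2 : (AddCircle.toCircle ((Complex.arg z : ℝ) : AddCircle (2 * π)) : ℂ) = z := by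
    rw [AddCircle.toCircle_apply_mk, Circle.coe_exp]
    have := Complex.norm_mul_exp_arg_mul_I z
    rw [hz] at this
    rw [div_self Real.two_pi_pos.ne']
    simpa using this
  simpa [F, h2] using this

lemma deg2_zero {p C : ℂ} {f : ℂ → ℂ} (hp0 : p ≠ 0) (hp : ‖p‖ < 1) (hC : C ≠ 0)
    (hf : ∀ z : ℂ, z ≠ 0 → DifferentiableAt ℂ f z)
    (hs : ∀ z : ℂ, z ≠ 0 → f (p * z) = C * z ^ (-2 : ℤ) * f z)
    (h0 : circleAverage f 0 1 = 0) (h1 : circleAverage (fun z => z ^ (-1 : ℤ) * f z) 0 1 = 0) :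
    ∀ z : ℂ, z ≠ 0 → f z = 0 := by
  have nz : ∀ z : ℂ, ‖z‖ = 1 → z ≠ 0 := fun z hz => by rw [← norm_pos_iff, hz]; norm_num
  set a : ℤ → ℂ := fun n => circleAverage (fun z => z ^ (-n) * f z) 0 1 with ha
  have hrec : ∀ n, a n = p ^ (-n) * C * a (n + 2) := by
    intro n
    have e1 := cav_shift_in (f := fun z => z ^ (-n) * f z) hp0 hp.le (by
      intro z hz _
      have hz0 : z ≠ 0 := by rw [← norm_pos_iff]; exact (norm_pos_iff.2 hp0).trans_le hz
      exact (differentiableAt_zpow.2 (Or.inl hz0)).mul (hf z hz0))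
    rw [ha]
    simp only
    rw [← e1, ← cav_const_mul]
    apply cav_congr
    intro z hz
    rw [hs z (nz z hz), mul_zpow, neg_add, zpow_add₀ (nz z hz)]
    ring
  have hpn : ∀ n : ℤ, p ^ (-n) * C ≠ 0 := fun n => mul_ne_zero (zpow_ne_zero _ hp0) hC
  have up : ∀ n, a n = 0 → a (n + 2) = 0 := by
    intro n hn
    have := hrec n
    rw [hn] at this
    exact (mul_eq_zero.1 this.symm).resolve_left (hpn n)
  have down : ∀ n, a n = 0 → a (n - 2) = 0 := by
    intro n hn
    rw [hrec (n - 2), sub_add_cancel, hn, mul_zero]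
  have A0 : a 0 = 0 := by
    rw [← h0]; simp [ha]
  have A1 : a 1 = 0 := h1
  have all : ∀ n, a n = 0 ∧ a (n + 1) = 0 := by
    intro n
    induction n using Int.induction_on with
    | zero => exact ⟨A0, by simpa using A1⟩
    | succ n ih => exact ⟨ih.2, by have := up _ ih.1; rw [add_assoc]; exact this⟩
    | pred n ih =>
      refine ⟨?_, by simpa using ih.1⟩
      have := down _ ih.2
      convert this using 2; ring
  have hcirc := circle_zero_of_coeffs (f := f)
    (fun z hz => (hf z (nz z hz)).continuousAt) (fun n => (all n).1)
  have hpre : IsPreconnected ({0}ᶜ : Set ℂ) :=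
    (isConnected_compl_singleton_of_one_lt_rank (by simp) 0).isPreconnected
  have han : AnalyticOnNhd ℂ f ({0}ᶜ : Set ℂ) := by
    apply DifferentiableOn.analyticOnNhd _ isOpen_compl_singleton
    intro z hz
    exact (hf z hz).differentiableWithinAt
  have := han.eqOn_zero_of_preconnected_of_frequently_eq_zero hpre (z₀ := 1) (by simp) (by
    have ht : Tendsto (fun n : ℕ => Complex.exp ((1 / ((n : ℝ) + 1) : ℝ) * Complex.I)) atTop
        (𝓝[≠] 1) := by
      rw [tendsto_nhdsWithin_iff]
      constructor
      · have h1 := tendsto_one_div_add_atTop_nhds_zero_nat (𝕜 := ℝ)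
        have h2 : Continuous fun x : ℝ => Complex.exp (x * Complex.I) := by fun_prop
        have := (h2.tendsto 0).comp h1
        simpa [Function.comp_def] using this
      · refine Eventually.of_forall fun n => ?_
        simp only [Set.mem_compl_iff, Set.mem_singleton_iff]
        intro he
        rw [Complex.exp_eq_one_iff] at he
        obtain ⟨k, hk⟩ := he
        have hk2 : (1 / ((n : ℝ) + 1) : ℝ) = k * (2 * π) := by
          have := mul_right_cancel₀ Complex.I_ne_zero
            (hk.trans (by ring : _ = ((k : ℂ) * (2 * (π : ℂ))) * Complex.I))
          exact_mod_cast this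
        have hpos : (0 : ℝ) < 1 / ((n : ℝ) + 1) := by positivity
        have hle : 1 / ((n : ℝ) + 1) ≤ 1 := by
          rw [div_le_one (by positivity)]; linarith [n.cast_nonneg (α := ℝ)]
        have hk0 : 0 < (k : ℝ) := by
          by_contra hneg
          push Not at hneg
          nlinarith [Real.pi_pos]
        have : (1 : ℝ) ≤ k := by exact_mod_cast (by exact_mod_cast hk0 : 0 < k)
        nlinarith [Real.pi_gt_three]
    exact ht.frequently (Frequently.of_forall fun n => hcirc _ (Complex.norm_exp_ofReal_mul_I _)))
  intro z hz
  exact this hz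

/-! ## The Weierstrass three term identity -/

lemma exists_dep (A B : Fin 3 → ℂ) : ∃ c : Fin 3 → ℂ, (c 0 ≠ 0 ∨ c 1 ≠ 0 ∨ c 2 ≠ 0) ∧
    c 0 * A 0 + c 1 * A 1 + c 2 * A 2 = 0 ∧ c 0 * B 0 + c 1 * B 1 + c 2 * B 2 = 0 := by
  by_cases h3 : A 0 * B 1 - A 1 * B 0 = 0
  · by_cases hA : A 0 = 0
    · by_cases hB : B 0 = 0
      · exact ⟨![1, 0, 0], by simp, by simp [hA], by simp [hB]⟩
      · exact ⟨![B 1, -B 0, 0], by simp [hB], by simp; linear_combination h3, by simp; ring⟩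
    · exact ⟨![A 1, -A 0, 0], by simp [hA], by simp; ring, by simp; linear_combination -h3⟩
  · exact ⟨![A 1 * B 2 - A 2 * B 1, A 2 * B 0 - A 0 * B 2, A 0 * B 1 - A 1 * B 0],
      by simp [h3], by simp; ring, by simp; ring⟩

noncomputable def thB (p a z : ℂ) : ℂ := a⁻¹ * (theta p (a * z) * theta p (a * z⁻¹))

lemma thB_diff {p a z : ℂ} (hp : ‖p‖ < 1) (ha : a ≠ 0) (hz : z ≠ 0) :
    DifferentiableAt ℂ (thB p a) z := by
  unfold thB
  have h1 := (theta_differentiableAt (z := a * z) hp (mul_ne_zero ha hz)).comp z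
    (f := fun z => a * z) (by fun_prop)
  have h2 := (theta_differentiableAt (z := a * z⁻¹) hp (mul_ne_zero ha (inv_ne_zero hz))).comp z
    (f := fun z => a * z⁻¹) (by fun_prop (disch := assumption))
  exact (h1.mul h2).const_mul _

lemma thB_shift {p a z : ℂ} (hp : ‖p‖ < 1) (hp0 : p ≠ 0) (ha : a ≠ 0) (hz : z ≠ 0) :
    thB p a (p * z) = p⁻¹ * z ^ (-2 : ℤ) * thB p a z := by
  unfold thB
  have e1 : a * (p * z) = p * (a * z) := by ring
  have e2 := theta_shift (z := a * (p * z)⁻¹) hp hp0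
    (mul_ne_zero ha (inv_ne_zero (mul_ne_zero hp0 hz)))
  have e3 : p * (a * (p * z)⁻¹) = a * z⁻¹ := by field_simp
  rw [e3] at e2
  rw [e1, theta_shift hp hp0 (mul_ne_zero ha hz), e2, zpow_neg]
  have : z ^ (2 : ℤ) = z ^ 2 := by norm_cast
  rw [this]
  field_simp

lemma thB_anti {p a z : ℂ} (hp : ‖p‖ < 1) (ha : a ≠ 0) (hz : z ≠ 0) :
    thB p a z = - thB p z a := by
  unfold thB
  have e := theta_inv (z := a * z⁻¹) hp (mul_ne_zero ha (inv_ne_zero hz))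
  have : (a * z⁻¹)⁻¹ = z * a⁻¹ := by field_simp
  rw [this] at e
  rw [e, mul_comm z a]
  field_simp

lemma thB_plucker {p x y u v : ℂ} (hp : ‖p‖ < 1) (hp0 : p ≠ 0) (hx : x ≠ 0) (hy : y ≠ 0)
    (hu : u ≠ 0) (hv : v ≠ 0) :
    thB p x y * thB p u v - thB p x u * thB p y v + thB p x v * thB p y u = 0 := by
  let w : Fin 3 → ℂ := ![x, y, u]
  obtain ⟨c, hc, c0, c1⟩ := exists_dep
    (fun i => circleAverage (thB p (w i)) 0 1)
    (fun i => circleAverage (fun z => z ^ (-1 : ℤ) * thB p (w i) z) 0 1)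
  simp only [w, Matrix.cons_val_zero, Matrix.cons_val_one, Matrix.cons_val] at c0 c1
  have nz : ∀ z : ℂ, ‖z‖ = 1 → z ≠ 0 := fun z hz => by rw [← norm_pos_iff, hz]; norm_num
  have I0 : ∀ a : ℂ, a ≠ 0 → ∀ c : ℂ, CircleIntegrable (fun z => c * thB p a z) 0 1 :=
    fun a ha c => cav_integrable fun z hz =>
      ((thB_diff hp ha (nz z hz)).const_mul c).continuousAt
  have I1 : ∀ a : ℂ, a ≠ 0 → ∀ c : ℂ,
      CircleIntegrable (fun z => c * (z ^ (-1 : ℤ) * thB p a z)) 0 1 :=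
    fun a ha c => cav_integrable fun z hz =>
      (((differentiableAt_zpow.2 (Or.inl (nz z hz))).mul
        (thB_diff hp ha (nz z hz))).const_mul c).continuousAt
  have key : ∀ z : ℂ, z ≠ 0 → c 0 * thB p x z + c 1 * thB p y z + c 2 * thB p u z = 0 := by
    refine deg2_zero (f := fun z => c 0 * thB p x z + c 1 * thB p y z + c 2 * thB p u z)
      (C := p⁻¹) hp0 hp (inv_ne_zero hp0) ?_ ?_ ?_ ?_
    · intro z hz
      exact (((thB_diff hp hx hz).const_mul _).add ((thB_diff hp hy hz).const_mul _)).add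
        ((thB_diff hp hu hz).const_mul _)
    · intro z hz
      rw [thB_shift hp hp0 hx hz, thB_shift hp hp0 hy hz, thB_shift hp hp0 hu hz]
      ring
    · have I01 : CircleIntegrable (fun z => c 0 * thB p x z + c 1 * thB p y z) 0 1 :=
        (I0 x hx _).add (I0 y hy _)
      rw [circleAverage_fun_add I01 (I0 u hu _),
        circleAverage_fun_add (I0 x hx _) (I0 y hy _), cav_const_mul, cav_const_mul, cav_const_mul]
      exact c0
    · have : (fun z => z ^ (-1 : ℤ) * (c 0 * thB p x z + c 1 * thB p y z + c 2 * thB p u z)) =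
          fun z => c 0 * (z ^ (-1 : ℤ) * thB p x z) + c 1 * (z ^ (-1 : ℤ) * thB p y z)
            + c 2 * (z ^ (-1 : ℤ) * thB p u z) := by
        ext z; ring
      have I11 : CircleIntegrable (fun z => c 0 * (z ^ (-1 : ℤ) * thB p x z) +
          c 1 * (z ^ (-1 : ℤ) * thB p y z)) 0 1 := (I1 x hx _).add (I1 y hy _)
      rw [this, circleAverage_fun_add I11 (I1 u hu _),
        circleAverage_fun_add (I1 x hx _) (I1 y hy _), cav_const_mul, cav_const_mul, cav_const_mul]
      exact c1
  have kx := key x hx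
  have ky := key y hy
  have ku := key u hu
  have kv := key v hv
  have self : ∀ a : ℂ, a ≠ 0 → thB p a a = 0 := by
    intro a ha
    have := thB_anti (p := p) hp ha ha
    linear_combination this / 2
  rw [self x hx] at kx
  rw [self y hy] at ky
  rw [self u hu] at ku
  rw [thB_anti hp hy hx, thB_anti hp hu hx] at kx
  rw [thB_anti hp hu hy] at ky
  rcases hc with h | h | h
  · have : c 0 * (thB p x y * thB p u v - thB p x u * thB p y v + thB p x v * thB p y u) = 0 := by
      linear_combination (thB p y u) * kv - thB p y v * ku + thB p u v * ky
    exact (mul_eq_zero.1 this).resolve_left h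
  · have : c 1 * (thB p x y * thB p u v - thB p x u * thB p y v + thB p x v * thB p y u) = 0 := by
      linear_combination -thB p u v * kx - thB p x u * kv + thB p x v * ku
    exact (mul_eq_zero.1 this).resolve_left h
  · have : c 2 * (thB p x y * thB p u v - thB p x u * thB p y v + thB p x v * thB p y u) = 0 := by
      linear_combination thB p x y * kv + thB p y v * kx - thB p x v * ky
    exact (mul_eq_zero.1 this).resolve_left h


lemma theta_p_div {p x : ℂ} (hp : ‖p‖ < 1) (hp0 : p ≠ 0) (hx : x ≠ 0) :
    theta p (p * x⁻¹) = theta p x := by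
  rw [theta_shift hp hp0 (inv_ne_zero hx), theta_inv hp hx, inv_inv]
  field_simp

lemma theta_four_aux {p t1 t6 c d z e : ℂ} (hp : ‖p‖ < 1) (hp0 : p ≠ 0) (h1 : t1 ≠ 0)
    (h6 : t6 ≠ 0) (hc : c ≠ 0) (hd : d ≠ 0) (hz : z ≠ 0) (he : e ≠ 0)
    (hprod : t1 * t6 * c ^ 2 * d ^ 2 = p) :
    theta p (z ^ 2) * t1 * t6 * (t6 * thB p t1 z * thB p (t6 * d) e * thB p (t6 * c) (c * z)
      - t1 * thB p t6 z * thB p (t1 * d) e * thB p (t1 * c) (c * z))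
    + t6 * theta p (t1 * t6⁻¹) * z * theta p (t1 * z⁻¹) * theta p (t6 * z⁻¹) * thB p (d * z⁻¹) e
      * thB p (c * z⁻¹) (c * z) = 0 := by
  have hpl := thB_plucker (x := t1 * d) (y := t6 * d) (u := d * z⁻¹) (v := e) hp hp0
    (mul_ne_zero h1 hd) (mul_ne_zero h6 hd) (mul_ne_zero hd (inv_ne_zero hz)) he
  have a1 : thB p (t6 * c) (c * z) = (t6 * c)⁻¹ * (theta p (t1 * d ^ 2 * z⁻¹) * theta p (t6 * z⁻¹)) := by
    rw [thB, ← theta_p_div (x := t1 * d ^ 2 * z⁻¹) hp hp0 (by positivity)]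
    congr 3
    · rw [← hprod]; field_simp
    · field_simp
  have a2 : thB p (t1 * c) (c * z) = (t1 * c)⁻¹ * (theta p (t6 * d ^ 2 * z⁻¹) * theta p (t1 * z⁻¹)) := by
    rw [thB, ← theta_p_div (x := t6 * d ^ 2 * z⁻¹) hp hp0 (by positivity)]
    congr 3
    · rw [← hprod]; field_simp
    · field_simp
  have a3 : thB p (c * z⁻¹) (c * z) =
      (c * z⁻¹)⁻¹ * (theta p (t1 * t6 * d ^ 2) * ((-(z ^ 2)⁻¹) * theta p (z ^ 2))) := by
    rw [thB, ← theta_p_div (x := t1 * t6 * d ^ 2) hp hp0 (by positivity),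
      ← theta_inv (z := z ^ 2) hp (by positivity)]
    congr 3
    · rw [← hprod]; field_simp
    · field_simp
  have b1 : thB p (t1 * d) (t6 * d) = (t1 * d)⁻¹ * (theta p (t1 * t6 * d ^ 2) * theta p (t1 * t6⁻¹)) := by
    rw [thB]
    congr 3
    · ring
    · field_simp
  have b2 : thB p (t1 * d) (d * z⁻¹) = (t1 * d)⁻¹ * (theta p (t1 * d ^ 2 * z⁻¹) * theta p (t1 * z)) := by
    rw [thB]
    congr 3
    · ring
    · field_simp
  have b3 : thB p (t6 * d) (d * z⁻¹) = (t6 * d)⁻¹ * (theta p (t6 * d ^ 2 * z⁻¹) * theta p (t6 * z)) := by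
    rw [thB]
    congr 3
    · ring
    · field_simp
  rw [b1, b2, b3] at hpl
  rw [a1, a2, a3, show thB p t1 z = t1⁻¹ * (theta p (t1 * z) * theta p (t1 * z⁻¹)) from rfl,
    show thB p t6 z = t6⁻¹ * (theta p (t6 * z) * theta p (t6 * z⁻¹)) from rfl]
  generalize thB p (d * z⁻¹) e = X1 at *
  generalize thB p (t1 * d) e = X2 at *
  generalize thB p (t6 * d) e = X3 at *
  generalize theta p (t1 * t6 * d ^ 2) = Y1 at *
  generalize theta p (t1 * t6⁻¹) = Y2 at *
  generalize theta p (t1 * d ^ 2 * z⁻¹) = Y3 at *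
  generalize theta p (t6 * d ^ 2 * z⁻¹) = Y4 at *
  generalize theta p (t1 * z⁻¹) = Y5 at *
  generalize theta p (t6 * z⁻¹) = Y6 at *
  field_simp at hpl ⊢
  linear_combination (-theta p (z^2) * Y5 * Y6) * hpl

lemma theta_four {p t1 t6 c d z e g : ℂ} (hp : ‖p‖ < 1) (hp0 : p ≠ 0) (h1 : t1 ≠ 0)
    (h6 : t6 ≠ 0) (hc : c ≠ 0) (hd : d ≠ 0) (hz : z ≠ 0) (he : e ≠ 0) (hg : g ≠ 0)
    (hprod : t1 * t6 * c ^ 2 * d ^ 2 = p) (hne : thB p (c * z⁻¹) (c * z) ≠ 0) :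
    theta p (z ^ 2) * t1 * t6 * (t6 * thB p t1 z * thB p (t6 * d) e * thB p (t6 * c) g
      - t1 * thB p t6 z * thB p (t1 * d) e * thB p (t1 * c) g)
    + t6 * theta p (t1 * t6⁻¹) * z * (theta p (t1 * z⁻¹) * theta p (t6 * z⁻¹) * thB p (d * z⁻¹) e
      * thB p (c * z⁻¹) g - theta p (t1 * z) * theta p (t6 * z) * thB p (d * z) e
      * thB p (c * z) g) = 0 := by
  have hz' := inv_ne_zero hz
  have A := theta_four_aux hp hp0 h1 h6 hc hd hz he hprod
  have B := theta_four_aux hp hp0 h1 h6 hc hd hz' he hprod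
  have i1 : ∀ a, thB p a z⁻¹ = thB p a z := by intro a; simp only [thB, inv_inv]; ring
  rw [i1, i1, inv_inv, inv_pow, theta_inv hp (by positivity)] at B
  have L : ∀ x, x ≠ 0 → thB p (c * z⁻¹) (c * z) * thB p x g =
      thB p x (c * z) * thB p (c * z⁻¹) g - thB p x (c * z⁻¹) * thB p (c * z) g := by
    intro x hx
    have := thB_plucker (x := x) (y := c * z⁻¹) (u := c * z) (v := g) hp hp0 hx
      (mul_ne_zero hc hz') (mul_ne_zero hc hz) hg
    linear_combination this
  have L6 := L (t6 * c) (mul_ne_zero h6 hc)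
  have L1 := L (t1 * c) (mul_ne_zero h1 hc)
  have an := thB_anti (p := p) (a := c * z) (z := c * z⁻¹) hp (mul_ne_zero hc hz) (mul_ne_zero hc hz')
  rw [an] at B
  have B' : theta p (z ^ 2) * t1 * t6 * (t6 * thB p t1 z * thB p (t6 * d) e * thB p (t6 * c) (c * z⁻¹)
      - t1 * thB p t6 z * thB p (t1 * d) e * thB p (t1 * c) (c * z⁻¹))
    + t6 * theta p (t1 * t6⁻¹) * z * theta p (t1 * z) * theta p (t6 * z) * thB p (d * z) e
      * thB p (c * z⁻¹) (c * z) = 0 := by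
    generalize thB p (c * z⁻¹) (c * z) = X1 at *
    generalize thB p (t1 * c) (c * z⁻¹) = X2 at *
    generalize thB p (t6 * c) (c * z⁻¹) = X3 at *
    generalize theta p (t1 * t6⁻¹) = Y2 at *
    field_simp at B ⊢
    linear_combination -B
  have key : thB p (c * z⁻¹) (c * z) * (theta p (z ^ 2) * t1 * t6 * (t6 * thB p t1 z * thB p (t6 * d) e * thB p (t6 * c) g
      - t1 * thB p t6 z * thB p (t1 * d) e * thB p (t1 * c) g)
    + t6 * theta p (t1 * t6⁻¹) * z * (theta p (t1 * z⁻¹) * theta p (t6 * z⁻¹) * thB p (d * z⁻¹) e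
      * thB p (c * z⁻¹) g - theta p (t1 * z) * theta p (t6 * z) * thB p (d * z) e
      * thB p (c * z) g)) = 0 := by
    linear_combination theta p (z ^ 2) * t1 * t6 * t6 * thB p t1 z * thB p (t6 * d) e * L6
      - theta p (z ^ 2) * t1 * t6 * t1 * thB p t6 z * thB p (t1 * d) e * L1
      + thB p (c * z⁻¹) g * A - thB p (c * z) g * B'
  exact (mul_eq_zero.1 key).resolve_left hne

lemma theta_ne_zero_circle {p x : ℂ} (hp : ‖p‖ < 1) (hx : ‖x‖ = 1) (h1 : x ≠ 1) :
    theta p x ≠ 0 := by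
  unfold theta
  rw [qpoch_succ hp]
  refine mul_ne_zero (mul_ne_zero (sub_ne_zero.2 (Ne.symm h1)) (qpoch_ne_zero' hp ?_))
    (qpoch_ne_zero' hp ?_)
  · rw [norm_mul, hx, mul_one]; exact hp
  · rw [norm_mul, norm_inv, hx, inv_one, mul_one]; exact hp

lemma thB_pair {p x c a b : ℂ} (hc0 : c ≠ 0) (ha : a ≠ 0) (hc : c ^ 2 = a * b) :
    thB p (c * x) (a * c⁻¹) = (c * x)⁻¹ * (theta p (a * x) * theta p (b * x)) := by
  rw [thB]
  congr 3
  · field_simp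
  · have : b = c ^ 2 * a⁻¹ := by rw [hc]; field_simp
    rw [this]; field_simp

/-- The six-parameter theta identity. -/
lemma theta_six {p t1 t2 t3 t4 t5 t6 z : ℂ} (hp : ‖p‖ < 1) (hp0 : p ≠ 0) (h1 : t1 ≠ 0)
    (h2 : t2 ≠ 0) (h3 : t3 ≠ 0) (h4 : t4 ≠ 0) (h5 : t5 ≠ 0)
    (h6 : t6 ≠ 0) (hz : ‖z‖ = 1) (hprod : t1 * t2 * t3 * t4 * t5 * t6 = p)
    (hn1 : ‖p‖ < ‖t2 * t3‖) (hn2 : ‖t2 * t3‖ < 1) :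
    theta p (z ^ 2) * (theta p (t1 * z) * theta p (t1 * z⁻¹) *
        (theta p (t6 * t2) * theta p (t6 * t3) * theta p (t6 * t4) * theta p (t6 * t5)) -
      theta p (t6 * z) * theta p (t6 * z⁻¹) *
        (theta p (t1 * t2) * theta p (t1 * t3) * theta p (t1 * t4) * theta p (t1 * t5))) =
    -t6 * theta p (t1 * t6⁻¹) * (z ^ 3 * (theta p (t1 * z⁻¹) * theta p (t2 * z⁻¹) *
      theta p (t3 * z⁻¹) * theta p (t4 * z⁻¹) * theta p (t5 * z⁻¹) * theta p (t6 * z⁻¹)) -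
      z⁻¹ * (theta p (t1 * z) * theta p (t2 * z) *
      theta p (t3 * z) * theta p (t4 * z) * theta p (t5 * z) * theta p (t6 * z))) := by
  have hz0 : z ≠ 0 := by rw [← norm_pos_iff, hz]; norm_num
  by_cases hz2 : z ^ 2 = 1
  · have hzi : z⁻¹ = z := by field_simp; exact hz2.symm
    rw [hz2, theta_one hp, hzi]
    have : z ^ 3 = z := by rw [pow_succ, hz2, one_mul]
    rw [this]; ring
  obtain ⟨c, hc⟩ := IsAlgClosed.exists_pow_nat_eq (t2 * t3) (n := 2) (by norm_num)
  obtain ⟨d, hd⟩ := IsAlgClosed.exists_pow_nat_eq (t4 * t5) (n := 2) (by norm_num)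
  have hc0 : c ≠ 0 := by rintro rfl; exact mul_ne_zero h2 h3 (by rw [← hc]; norm_num)
  have hd0 : d ≠ 0 := by rintro rfl; exact mul_ne_zero h4 h5 (by rw [← hd]; norm_num)
  have hne : thB p (c * z⁻¹) (c * z) ≠ 0 := by
    have e1 : c * z⁻¹ * (c * z) = t2 * t3 := by rw [← hc]; field_simp
    have e2 : c * z⁻¹ * (c * z)⁻¹ = (z ^ 2)⁻¹ := by field_simp
    rw [thB, e1, e2]
    refine mul_ne_zero (by positivity) (mul_ne_zero (theta_ne_zero hp hn1 hn2)
      (theta_ne_zero_circle hp (by simp [hz]) ?_))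
    intro h; exact hz2 (inv_eq_one.1 h)
  have T := theta_four (e := t4 * d⁻¹) (g := t2 * c⁻¹) hp hp0 h1 h6 hc0 hd0 hz0
    (mul_ne_zero h4 (inv_ne_zero hd0)) (mul_ne_zero h2 (inv_ne_zero hc0))
    (by rw [hc, hd, ← hprod]; ring) hne
  simp only [mul_comm t6 c, mul_comm t6 d, mul_comm t1 c, mul_comm t1 d, thB_pair hc0 h2 hc,
    thB_pair hd0 h4 hd] at T
  rw [show thB p t1 z = t1⁻¹ * (theta p (t1 * z) * theta p (t1 * z⁻¹)) from rfl,
    show thB p t6 z = t6⁻¹ * (theta p (t6 * z) * theta p (t6 * z⁻¹)) from rfl] at T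
  simp only [mul_comm t6 t2, mul_comm t6 t3, mul_comm t6 t4, mul_comm t6 t5,
    mul_comm t1 t2, mul_comm t1 t3, mul_comm t1 t4, mul_comm t1 t5]
  generalize theta p (t1 * t6⁻¹) = X at *
  generalize theta p (t1 * z⁻¹) = X1 at *
  generalize theta p (t2 * z⁻¹) = X2 at *
  generalize theta p (t3 * z⁻¹) = X3 at *
  generalize theta p (t4 * z⁻¹) = X4 at *
  generalize theta p (t5 * z⁻¹) = X5 at *
  generalize theta p (t6 * z⁻¹) = X6 at *
  generalize theta p (t2 * t1) = Z12 at *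
  generalize theta p (t3 * t1) = Z13 at *
  generalize theta p (t4 * t1) = Z14 at *
  generalize theta p (t5 * t1) = Z15 at *
  generalize theta p (t2 * t6) = Z62 at *
  generalize theta p (t3 * t6) = Z63 at *
  generalize theta p (t4 * t6) = Z64 at *
  generalize theta p (t5 * t6) = Z65 at *
  field_simp at T
  field_simp
  linear_combination T

set_option linter.unusedSimpArgs false

noncomputable def gg (p q t z : ℂ) : ℂ := egamma (t * z) p q * egamma (t * z⁻¹) p q

noncomputable def EE (p q t1 t2 t3 t4 t5 t6 z : ℂ) : ℂ :=
  gg p q t1 z * gg p q t2 z * gg p q t3 z * gg p q t4 z * gg p q t5 z * gg p q t6 z *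
    (theta p (z ^ 2) * theta q ((z ^ 2)⁻¹))

noncomputable def II (p q t1 t2 t3 t4 t5 t6 : ℂ) : ℂ :=
  circleAverage (EE p q t1 t2 t3 t4 t5 t6) 0 1

lemma gg_diff {p q t z : ℂ} (hp : ‖p‖ < 1) (hq : ‖q‖ < 1) (ht : t ≠ 0) (hz : z ≠ 0)
    (h1 : ‖t * z‖ < 1) (h2 : ‖t * z⁻¹‖ < 1) : DifferentiableAt ℂ (gg p q t) z := by
  unfold gg
  have a1 := (egamma_differentiableAt (z := t * z) hp hq (mul_ne_zero ht hz) h1).comp z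
    (f := fun z => t * z) (by fun_prop)
  have a2 := (egamma_differentiableAt (z := t * z⁻¹) hp hq (mul_ne_zero ht (inv_ne_zero hz)) h2).comp z
    (f := fun z => t * z⁻¹) (by fun_prop (disch := assumption))
  exact a1.mul a2

lemma EE_diff {p q t1 t2 t3 t4 t5 t6 z : ℂ} (hp : ‖p‖ < 1) (hq : ‖q‖ < 1)
    (h1 : t1 ≠ 0) (h2 : t2 ≠ 0) (h3 : t3 ≠ 0) (h4 : t4 ≠ 0) (h5 : t5 ≠ 0) (h6 : t6 ≠ 0)
    (n1 : ‖t1‖ < 1) (n2 : ‖t2‖ < 1) (n3 : ‖t3‖ < 1) (n4 : ‖t4‖ < 1) (n5 : ‖t5‖ < 1) (n6 : ‖t6‖ < 1)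
    (hz : ‖z‖ = 1) : DifferentiableAt ℂ (EE p q t1 t2 t3 t4 t5 t6) z := by
  have hz0 : z ≠ 0 := by rw [← norm_pos_iff, hz]; norm_num
  have G : ∀ t : ℂ, t ≠ 0 → ‖t‖ < 1 → DifferentiableAt ℂ (gg p q t) z := fun t ht hn =>
    gg_diff hp hq ht hz0 (by simpa [hz] using hn) (by simpa [hz] using hn)
  have a1 := (theta_differentiableAt (z := z ^ 2) hp (by positivity)).comp z
    (f := fun z => z ^ 2) (by fun_prop)
  have a2 := (theta_differentiableAt (z := (z ^ 2)⁻¹) hq (by positivity)).comp z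
    (f := fun z => (z ^ 2)⁻¹) (by fun_prop (disch := positivity))
  exact ((((((G t1 h1 n1).mul (G t2 h2 n2)).mul (G t3 h3 n3)).mul (G t4 h4 n4)).mul
    (G t5 h5 n5)).mul (G t6 h6 n6)).mul (a1.mul a2)

lemma gg_shift {p q t z : ℂ} (hp : ‖p‖ < 1) (hq : ‖q‖ < 1) (hq0 : q ≠ 0) (ht : t ≠ 0)
    (hn : ‖t‖ < 1) (hz : ‖z‖ = 1) :
    gg p q (q * t) z = theta p (t * z) * theta p (t * z⁻¹) * gg p q t z := by
  have hz0 : z ≠ 0 := by rw [← norm_pos_iff, hz]; norm_num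
  unfold gg
  rw [mul_assoc, mul_assoc, egamma_shift hp hq hq0 (mul_ne_zero ht hz0) (by simpa [hz] using hn),
    egamma_shift hp hq hq0 (mul_ne_zero ht (inv_ne_zero hz0)) (by simpa [hz] using hn)]
  ring

/-- one factor of the telescoping function -/
noncomputable def gk (p q t z : ℂ) : ℂ := egamma (q * (t * z)) p q * egamma (t * z⁻¹) p q

lemma gk_diff {p q t z : ℂ} (hp : ‖p‖ < 1) (hq : ‖q‖ < 1) (hq0 : q ≠ 0) (ht : t ≠ 0)
    (hn : ‖t‖ < 1) (hz1 : 1 ≤ ‖z‖) (hz2 : ‖q * z‖ ≤ 1) : DifferentiableAt ℂ (gk p q t) z := by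
  have hz : z ≠ 0 := by rw [← norm_pos_iff]; linarith
  unfold gk
  have a1 := (egamma_differentiableAt (z := q * (t * z)) hp hq
    (mul_ne_zero hq0 (mul_ne_zero ht hz)) (by
      rw [show q * (t * z) = t * (q * z) by ring, norm_mul]
      nlinarith [norm_nonneg t, norm_nonneg (q * z)])).comp z
    (f := fun z => q * (t * z)) (by fun_prop)
  have a2 := (egamma_differentiableAt (z := t * z⁻¹) hp hq (mul_ne_zero ht (inv_ne_zero hz)) (by
      rw [norm_mul, norm_inv]
      have : ‖z‖⁻¹ ≤ 1 := inv_le_one_of_one_le₀ hz1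
      nlinarith [norm_nonneg t, inv_nonneg.2 (norm_nonneg z)])).comp z
    (f := fun z => t * z⁻¹) (by fun_prop (disch := assumption))
  exact a1.mul a2

noncomputable def GG (p q t1 t2 t3 t4 t5 t6 z : ℂ) : ℂ :=
  gk p q t1 z * gk p q t2 z * gk p q t3 z * gk p q t4 z * gk p q t5 z * gk p q t6 z *
    (z⁻¹ * theta q ((z ^ 2)⁻¹))

lemma gk_at {p q t z : ℂ} (hp : ‖p‖ < 1) (hq : ‖q‖ < 1) (hq0 : q ≠ 0) (ht : t ≠ 0)
    (hn : ‖t‖ < 1) (hz : ‖z‖ = 1) : gk p q t z = theta p (t * z) * gg p q t z := by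
  have hz0 : z ≠ 0 := by rw [← norm_pos_iff, hz]; norm_num
  unfold gg gk
  rw [egamma_shift hp hq hq0 (mul_ne_zero ht hz0) (by simpa [hz] using hn)]
  ring

lemma gk_at' {p q t z : ℂ} (hp : ‖p‖ < 1) (hq : ‖q‖ < 1) (hq0 : q ≠ 0) (ht : t ≠ 0)
    (hn : ‖t‖ < 1) (hz : ‖z‖ = 1) :
    gk p q t (q⁻¹ * z) = theta p (t * z⁻¹) * gg p q t z := by
  have hz0 : z ≠ 0 := by rw [← norm_pos_iff, hz]; norm_num
  unfold gg gk
  have e1 : q * (t * (q⁻¹ * z)) = t * z := by field_simp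
  have e2 : t * (q⁻¹ * z)⁻¹ = q * (t * z⁻¹) := by field_simp
  rw [e1, e2, egamma_shift hp hq hq0 (mul_ne_zero ht (inv_ne_zero hz0)) (by simpa [hz] using hn)]
  ring

lemma II_shift {p q t1 t2 t3 t4 t5 t6 : ℂ} (hp : ‖p‖ < 1) (hp0 : p ≠ 0) (hq : ‖q‖ < 1) (hq0 : q ≠ 0)
    (h1 : t1 ≠ 0) (h2 : t2 ≠ 0) (h3 : t3 ≠ 0) (h4 : t4 ≠ 0) (h5 : t5 ≠ 0) (h6 : t6 ≠ 0)
    (n1 : ‖t1‖ < 1) (n2 : ‖t2‖ < 1) (n3 : ‖t3‖ < 1) (n4 : ‖t4‖ < 1) (n5 : ‖t5‖ < 1) (n6 : ‖t6‖ < 1)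
    (hprod : t1 * t2 * t3 * t4 * t5 * t6 = p) :
    theta p (t6 * t2) * theta p (t6 * t3) * theta p (t6 * t4) * theta p (t6 * t5) *
      II p q (q * t1) t2 t3 t4 t5 t6 =
    theta p (t1 * t2) * theta p (t1 * t3) * theta p (t1 * t4) * theta p (t1 * t5) *
      II p q t1 t2 t3 t4 t5 (q * t6) := by
  have hm : ∀ a b : ℂ, ‖a‖ < 1 → ‖b‖ < 1 → ‖a * b‖ < 1 := by
    intro a b ha hb
    rw [norm_mul]; nlinarith [norm_nonneg a, norm_nonneg b]
  have hn1 : ‖p‖ < ‖t2 * t3‖ := by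
    rw [← hprod, show t1 * t2 * t3 * t4 * t5 * t6 = (t1 * t4 * t5 * t6) * (t2 * t3) by ring, norm_mul]
    have := hm _ _ (hm _ _ (hm _ _ n1 n4) n5) n6
    have h0 : 0 < ‖t2 * t3‖ := norm_pos_iff.2 (mul_ne_zero h2 h3)
    nlinarith
  set K : ℂ := -t6 * theta p (t1 * t6⁻¹) with hK
  set W := GG p q t1 t2 t3 t4 t5 t6 with hW
  have hWd : ∀ z : ℂ, 1 ≤ ‖z‖ → ‖z‖ ≤ ‖q⁻¹‖ → DifferentiableAt ℂ W z := by
    intro z hz1 hz2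
    have hz : z ≠ 0 := by rw [← norm_pos_iff]; linarith
    have hz3 : ‖q * z‖ ≤ 1 := by
      rw [norm_inv] at hz2
      rw [norm_mul]
      calc ‖q‖ * ‖z‖ ≤ ‖q‖ * ‖q‖⁻¹ := by gcongr
        _ = 1 := mul_inv_cancel₀ (norm_ne_zero_iff.2 hq0)
    have a2 := (theta_differentiableAt (z := (z ^ 2)⁻¹) hq (by positivity)).comp z
      (f := fun z => (z ^ 2)⁻¹) (by fun_prop (disch := positivity))
    have a3 : DifferentiableAt ℂ (fun z : ℂ => z⁻¹) z := by fun_prop (disch := assumption)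
    have G : ∀ t : ℂ, t ≠ 0 → ‖t‖ < 1 → DifferentiableAt ℂ (gk p q t) z := fun t ht hn =>
      gk_diff hp hq hq0 ht hn hz1 hz3
    exact ((((((G t1 h1 n1).mul (G t2 h2 n2)).mul (G t3 h3 n3)).mul (G t4 h4 n4)).mul
      (G t5 h5 n5)).mul (G t6 h6 n6)).mul (a3.mul a2)
  have hq1 : 1 ≤ ‖q⁻¹‖ := by
    rw [norm_inv]; exact (one_le_inv₀ (norm_pos_iff.2 hq0)).2 hq.le
  have tel := cav_shift_out hq1 hWd
  have nq : ∀ t : ℂ, ‖t‖ < 1 → ‖q * t‖ < 1 := fun t ht => hm _ _ hq ht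
  have c1 : ∀ z : ℂ, ‖z‖ = 1 → ContinuousAt (EE p q t1 t2 t3 t4 t5 (q * t6)) z := fun z hz =>
    (EE_diff hp hq h1 h2 h3 h4 h5 (mul_ne_zero hq0 h6) n1 n2 n3 n4 n5 (nq _ n6) hz).continuousAt
  have c2 : ∀ z : ℂ, ‖z‖ = 1 → ContinuousAt W z := fun z hz =>
    (hWd z hz.ge (hz.le.trans hq1)).continuousAt
  have c3 : ∀ z : ℂ, ‖z‖ = 1 → ContinuousAt (fun z => W (q⁻¹ * z)) z := fun z hz => by
    have hd := hWd (q⁻¹ * z) (by rw [norm_mul, hz, mul_one]; exact hq1)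
      (by rw [norm_mul, hz, mul_one])
    exact (hd.comp z (f := fun z => q⁻¹ * z) (by fun_prop)).continuousAt
  unfold II
  rw [← cav_const_mul, ← cav_const_mul]
  set T := theta p (t1 * t2) * theta p (t1 * t3) * theta p (t1 * t4) * theta p (t1 * t5) with hT
  have main : ∀ z : ℂ, ‖z‖ = 1 →
      theta p (t6 * t2) * theta p (t6 * t3) * theta p (t6 * t4) * theta p (t6 * t5) *
        EE p q (q * t1) t2 t3 t4 t5 t6 z = T * EE p q t1 t2 t3 t4 t5 (q * t6) z +
          (K * W (q⁻¹ * z) - K * W z) := by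
    intro z hz
    have hz0 : z ≠ 0 := by rw [← norm_pos_iff, hz]; norm_num
    have six := theta_six hp hp0 h1 h2 h3 h4 h5 h6 hz hprod hn1 (hm _ _ n2 n3)
    have tq : theta q (((q⁻¹ * z) ^ 2)⁻¹) = q⁻¹ * z ^ 4 * theta q ((z ^ 2)⁻¹) := by
      have e : ((q⁻¹ * z) ^ 2)⁻¹ = q * (q * (z ^ 2)⁻¹) := by field_simp
      rw [e, theta_shift hq hq0 (by positivity), theta_shift hq hq0 (by positivity)]
      field_simp
    simp only [hW, GG, EE]
    rw [gg_shift hp hq hq0 h1 n1 hz, gg_shift hp hq hq0 h6 n6 hz, tq]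
    rw [gk_at hp hq hq0 h1 n1 hz, gk_at hp hq hq0 h2 n2 hz, gk_at hp hq hq0 h3 n3 hz,
      gk_at hp hq hq0 h4 n4 hz, gk_at hp hq hq0 h5 n5 hz, gk_at hp hq hq0 h6 n6 hz,
      gk_at' hp hq hq0 h1 n1 hz, gk_at' hp hq hq0 h2 n2 hz, gk_at' hp hq hq0 h3 n3 hz,
      gk_at' hp hq hq0 h4 n4 hz, gk_at' hp hq hq0 h5 n5 hz, gk_at' hp hq hq0 h6 n6 hz]
    have e3 : (q⁻¹ * z)⁻¹ * (q⁻¹ * z ^ 4 * theta q ((z ^ 2)⁻¹)) = z ^ 3 * theta q ((z ^ 2)⁻¹) := by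
      field_simp
    rw [e3]
    linear_combination gg p q t1 z * gg p q t2 z * gg p q t3 z * gg p q t4 z * gg p q t5 z *
      gg p q t6 z * theta q ((z ^ 2)⁻¹) * six
  rw [cav_congr main]
  have i1 : CircleIntegrable (fun z => T * EE p q t1 t2 t3 t4 t5 (q * t6) z) 0 1 :=
    cav_integrable fun z hz => (c1 z hz).const_mul _
  have i2 : CircleIntegrable (fun z => K * W z) 0 1 :=
    cav_integrable fun z hz => (c2 z hz).const_mul _
  have i3 : CircleIntegrable (fun z => K * W (q⁻¹ * z)) 0 1 :=
    cav_integrable fun z hz => (c3 z hz).const_mul _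
  have i4 : CircleIntegrable (fun z => K * W (q⁻¹ * z) - K * W z) 0 1 := i3.sub i2
  rw [circleAverage_fun_add i1 i4, circleAverage_fun_sub i3 i2, cav_const_mul, cav_const_mul,
    cav_const_mul, tel]
  ring

noncomputable def NN (p q t1 t2 t3 t4 t5 t6 : ℂ) : ℂ :=
  egamma (t1 * t2) p q * egamma (t1 * t3) p q * egamma (t1 * t4) p q *
  egamma (t1 * t5) p q * egamma (t1 * t6) p q * egamma (t2 * t3) p q *
  egamma (t2 * t4) p q * egamma (t2 * t5) p q * egamma (t2 * t6) p q *
  egamma (t3 * t4) p q * egamma (t3 * t5) p q * egamma (t3 * t6) p q *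
  egamma (t4 * t5) p q * egamma (t4 * t6) p q * egamma (t5 * t6) p q

noncomputable def JJ (p q t1 t2 t3 t4 t5 t6 : ℂ) : ℂ :=
  II p q t1 t2 t3 t4 t5 t6 / NN p q t1 t2 t3 t4 t5 t6

lemma egamma_ne_zero {p q z : ℂ} (hp : ‖p‖ < 1) (hp0 : p ≠ 0) (hq : ‖q‖ < 1) (hq0 : q ≠ 0)
    (h0 : ‖p * q‖ < ‖z‖) (h : ‖z‖ < 1) : egamma z p q ≠ 0 := by
  intro h1
  have := egamma_refl hp hq hp0 hq0 h0 h
  rw [h1, zero_mul] at this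
  exact zero_ne_one this

lemma norm_mul_lt {a b : ℂ} (ha : ‖a‖ < 1) (hb : ‖b‖ < 1) : ‖a * b‖ < 1 := by
  rw [norm_mul]; nlinarith [norm_nonneg a, norm_nonneg b]

lemma norm_pair_lt {P x y : ℂ} (hx : x ≠ 0) (hP : P = y * x) (hy : ‖y‖ < 1) : ‖P‖ < ‖x‖ := by
  rw [hP, norm_mul]
  have h0 : 0 < ‖x‖ := norm_pos_iff.2 hx
  nlinarith

lemma NN_ne_zero {p q t1 t2 t3 t4 t5 t6 : ℂ} (hp : ‖p‖ < 1) (hp0 : p ≠ 0) (hq : ‖q‖ < 1) (hq0 : q ≠ 0)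
    (h1 : t1 ≠ 0) (h2 : t2 ≠ 0) (h3 : t3 ≠ 0) (h4 : t4 ≠ 0) (h5 : t5 ≠ 0) (h6 : t6 ≠ 0)
    (n1 : ‖t1‖ < 1) (n2 : ‖t2‖ < 1) (n3 : ‖t3‖ < 1) (n4 : ‖t4‖ < 1) (n5 : ‖t5‖ < 1) (n6 : ‖t6‖ < 1)
    (hprod : t1 * t2 * t3 * t4 * t5 * t6 = p * q) : NN p q t1 t2 t3 t4 t5 t6 ≠ 0 := by
  have G : ∀ a b c d e f : ℂ, a ≠ 0 → b ≠ 0 → ‖a‖ < 1 → ‖b‖ < 1 → ‖c‖ < 1 → ‖d‖ < 1 → ‖e‖ < 1 →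
      ‖f‖ < 1 → p * q = (c * d * e * f) * (a * b) → egamma (a * b) p q ≠ 0 := by
    intro a b c d e f ha hb na nb nc nd ne nf h
    exact egamma_ne_zero hp hp0 hq hq0 (norm_pair_lt (mul_ne_zero ha hb) h
      (norm_mul_lt (norm_mul_lt (norm_mul_lt nc nd) ne) nf)) (norm_mul_lt na nb)
  unfold NN
  have g12 := G t1 t2 t3 t4 t5 t6 h1 h2 n1 n2 n3 n4 n5 n6 (by rw [← hprod]; ring)
  have g13 := G t1 t3 t2 t4 t5 t6 h1 h3 n1 n3 n2 n4 n5 n6 (by rw [← hprod]; ring)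
  have g14 := G t1 t4 t2 t3 t5 t6 h1 h4 n1 n4 n2 n3 n5 n6 (by rw [← hprod]; ring)
  have g15 := G t1 t5 t2 t3 t4 t6 h1 h5 n1 n5 n2 n3 n4 n6 (by rw [← hprod]; ring)
  have g16 := G t1 t6 t2 t3 t4 t5 h1 h6 n1 n6 n2 n3 n4 n5 (by rw [← hprod]; ring)
  have g23 := G t2 t3 t1 t4 t5 t6 h2 h3 n2 n3 n1 n4 n5 n6 (by rw [← hprod]; ring)
  have g24 := G t2 t4 t1 t3 t5 t6 h2 h4 n2 n4 n1 n3 n5 n6 (by rw [← hprod]; ring)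
  have g25 := G t2 t5 t1 t3 t4 t6 h2 h5 n2 n5 n1 n3 n4 n6 (by rw [← hprod]; ring)
  have g26 := G t2 t6 t1 t3 t4 t5 h2 h6 n2 n6 n1 n3 n4 n5 (by rw [← hprod]; ring)
  have g34 := G t3 t4 t1 t2 t5 t6 h3 h4 n3 n4 n1 n2 n5 n6 (by rw [← hprod]; ring)
  have g35 := G t3 t5 t1 t2 t4 t6 h3 h5 n3 n5 n1 n2 n4 n6 (by rw [← hprod]; ring)
  have g36 := G t3 t6 t1 t2 t4 t5 h3 h6 n3 n6 n1 n2 n4 n5 (by rw [← hprod]; ring)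
  have g45 := G t4 t5 t1 t2 t3 t6 h4 h5 n4 n5 n1 n2 n3 n6 (by rw [← hprod]; ring)
  have g46 := G t4 t6 t1 t2 t3 t5 h4 h6 n4 n6 n1 n2 n3 n5 (by rw [← hprod]; ring)
  have g56 := G t5 t6 t1 t2 t3 t4 h5 h6 n5 n6 n1 n2 n3 n4 (by rw [← hprod]; ring)
  simp only [mul_ne_zero_iff]
  tauto

lemma JJ_shift {p q t1 t2 t3 t4 t5 t6 : ℂ} (hp : ‖p‖ < 1) (hp0 : p ≠ 0) (hq : ‖q‖ < 1) (hq0 : q ≠ 0)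
    (h1 : t1 ≠ 0) (h2 : t2 ≠ 0) (h3 : t3 ≠ 0) (h4 : t4 ≠ 0) (h5 : t5 ≠ 0) (h6 : t6 ≠ 0)
    (n1 : ‖t1‖ < 1) (n2 : ‖t2‖ < 1) (n3 : ‖t3‖ < 1) (n4 : ‖t4‖ < 1) (n5 : ‖t5‖ < 1) (n6 : ‖t6‖ < 1)
    (hprod : t1 * t2 * t3 * t4 * t5 * t6 = p) :
    JJ p q (q * t1) t2 t3 t4 t5 t6 = JJ p q t1 t2 t3 t4 t5 (q * t6) := by
  have T : ∀ a b c d e f : ℂ, a ≠ 0 → b ≠ 0 → ‖a‖ < 1 → ‖b‖ < 1 → ‖c‖ < 1 → ‖d‖ < 1 → ‖e‖ < 1 →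
      ‖f‖ < 1 → p = (c * d * e * f) * (a * b) → theta p (a * b) ≠ 0 := by
    intro a b c d e f ha hb na nb nc nd ne nf h
    exact theta_ne_zero hp (norm_pair_lt (mul_ne_zero ha hb) h
      (norm_mul_lt (norm_mul_lt (norm_mul_lt nc nd) ne) nf)) (norm_mul_lt na nb)
  have g62 := T t6 t2 t1 t3 t4 t5 h6 h2 n6 n2 n1 n3 n4 n5 (by rw [← hprod]; ring)
  have g63 := T t6 t3 t1 t2 t4 t5 h6 h3 n6 n3 n1 n2 n4 n5 (by rw [← hprod]; ring)
  have g64 := T t6 t4 t1 t2 t3 t5 h6 h4 n6 n4 n1 n2 n3 n5 (by rw [← hprod]; ring)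
  have g65 := T t6 t5 t1 t2 t3 t4 h6 h5 n6 n5 n1 n2 n3 n4 (by rw [← hprod]; ring)
  have g12 := T t1 t2 t3 t4 t5 t6 h1 h2 n1 n2 n3 n4 n5 n6 (by rw [← hprod]; ring)
  have g13 := T t1 t3 t2 t4 t5 t6 h1 h3 n1 n3 n2 n4 n5 n6 (by rw [← hprod]; ring)
  have g14 := T t1 t4 t2 t3 t5 t6 h1 h4 n1 n4 n2 n3 n5 n6 (by rw [← hprod]; ring)
  have g15 := T t1 t5 t2 t3 t4 t6 h1 h5 n1 n5 n2 n3 n4 n6 (by rw [← hprod]; ring)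
  have g16 := T t1 t6 t2 t3 t4 t5 h1 h6 n1 n6 n2 n3 n4 n5 (by rw [← hprod]; ring)
  have S : ∀ a b : ℂ, a ≠ 0 → b ≠ 0 → ‖a‖ < 1 → ‖b‖ < 1 →
      egamma (q * a * b) p q = theta p (a * b) * egamma (a * b) p q := by
    intro a b ha hb na nb
    rw [mul_assoc]; exact egamma_shift hp hq hq0 (mul_ne_zero ha hb) (norm_mul_lt na nb)
  have S' : ∀ a b : ℂ, a ≠ 0 → b ≠ 0 → ‖a‖ < 1 → ‖b‖ < 1 →
      egamma (b * (q * a)) p q = theta p (a * b) * egamma (b * a) p q := by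
    intro a b ha hb na nb
    rw [mul_comm b (q * a), S a b ha hb na nb, mul_comm b a]
  have key := II_shift hp hp0 hq hq0 h1 h2 h3 h4 h5 h6 n1 n2 n3 n4 n5 n6 hprod
  have e1 : NN p q (q * t1) t2 t3 t4 t5 t6 = (theta p (t1 * t2) * theta p (t1 * t3) *
      theta p (t1 * t4) * theta p (t1 * t5)) * (theta p (t1 * t6) * NN p q t1 t2 t3 t4 t5 t6) := by
    unfold NN
    rw [S t1 t2 h1 h2 n1 n2, S t1 t3 h1 h3 n1 n3, S t1 t4 h1 h4 n1 n4, S t1 t5 h1 h5 n1 n5,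
      S t1 t6 h1 h6 n1 n6]
    ring
  have e2 : NN p q t1 t2 t3 t4 t5 (q * t6) = (theta p (t6 * t2) * theta p (t6 * t3) *
      theta p (t6 * t4) * theta p (t6 * t5)) * (theta p (t1 * t6) * NN p q t1 t2 t3 t4 t5 t6) := by
    unfold NN
    rw [S' t6 t1 h6 h1 n6 n1, S' t6 t2 h6 h2 n6 n2, S' t6 t3 h6 h3 n6 n3, S' t6 t4 h6 h4 n6 n4,
      S' t6 t5 h6 h5 n6 n5, mul_comm t6 t1]
    ring
  unfold JJ
  rw [e1, e2, ← div_div, ← div_div]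
  have A : theta p (t1 * t2) * theta p (t1 * t3) * theta p (t1 * t4) * theta p (t1 * t5) ≠ 0 := by
    simp only [mul_ne_zero_iff]; tauto
  have B : theta p (t6 * t2) * theta p (t6 * t3) * theta p (t6 * t4) * theta p (t6 * t5) ≠ 0 := by
    simp only [mul_ne_zero_iff]; tauto
  have F : ∀ a b x y : ℂ, x ≠ 0 → y ≠ 0 → y * a = x * b → a / x = b / y := by
    intro a b x y hx hy h
    rw [div_eq_div_iff hx hy]; linear_combination h
  rw [F _ _ _ _ A B key]
  simp only [div_div, mul_assoc]

lemma JJ_swap2 (p q t1 t2 t3 t4 t5 t6 : ℂ) :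
    JJ p q t1 t2 t3 t4 t5 t6 = JJ p q t2 t1 t3 t4 t5 t6 := by
  have e1 : EE p q t1 t2 t3 t4 t5 t6 = EE p q t2 t1 t3 t4 t5 t6 := by
    ext z; unfold EE; ring
  have e2 : NN p q t1 t2 t3 t4 t5 t6 = NN p q t2 t1 t3 t4 t5 t6 := by
    unfold NN
    simp only [mul_comm t2 t1, mul_comm t3 t1, mul_comm t3 t2, mul_comm t4 t1, mul_comm t4 t2, mul_comm t4 t3, mul_comm t5 t1, mul_comm t5 t2, mul_comm t5 t3, mul_comm t5 t4, mul_comm t6 t1, mul_comm t6 t2, mul_comm t6 t3, mul_comm t6 t4, mul_comm t6 t5]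
    ring
  rw [JJ, JJ, II, II, e1, e2]

lemma JJ_swap3 (p q t1 t2 t3 t4 t5 t6 : ℂ) :
    JJ p q t1 t2 t3 t4 t5 t6 = JJ p q t3 t2 t1 t4 t5 t6 := by
  have e1 : EE p q t1 t2 t3 t4 t5 t6 = EE p q t3 t2 t1 t4 t5 t6 := by
    ext z; unfold EE; ring
  have e2 : NN p q t1 t2 t3 t4 t5 t6 = NN p q t3 t2 t1 t4 t5 t6 := by
    unfold NN
    simp only [mul_comm t2 t1, mul_comm t3 t1, mul_comm t3 t2, mul_comm t4 t1, mul_comm t4 t2, mul_comm t4 t3, mul_comm t5 t1, mul_comm t5 t2, mul_comm t5 t3, mul_comm t5 t4, mul_comm t6 t1, mul_comm t6 t2, mul_comm t6 t3, mul_comm t6 t4, mul_comm t6 t5]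
    ring
  rw [JJ, JJ, II, II, e1, e2]

lemma JJ_swap4 (p q t1 t2 t3 t4 t5 t6 : ℂ) :
    JJ p q t1 t2 t3 t4 t5 t6 = JJ p q t4 t2 t3 t1 t5 t6 := by
  have e1 : EE p q t1 t2 t3 t4 t5 t6 = EE p q t4 t2 t3 t1 t5 t6 := by
    ext z; unfold EE; ring
  have e2 : NN p q t1 t2 t3 t4 t5 t6 = NN p q t4 t2 t3 t1 t5 t6 := by
    unfold NN
    simp only [mul_comm t2 t1, mul_comm t3 t1, mul_comm t3 t2, mul_comm t4 t1, mul_comm t4 t2, mul_comm t4 t3, mul_comm t5 t1, mul_comm t5 t2, mul_comm t5 t3, mul_comm t5 t4, mul_comm t6 t1, mul_comm t6 t2, mul_comm t6 t3, mul_comm t6 t4, mul_comm t6 t5]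
    ring
  rw [JJ, JJ, II, II, e1, e2]

lemma JJ_swap5 (p q t1 t2 t3 t4 t5 t6 : ℂ) :
    JJ p q t1 t2 t3 t4 t5 t6 = JJ p q t5 t2 t3 t4 t1 t6 := by
  have e1 : EE p q t1 t2 t3 t4 t5 t6 = EE p q t5 t2 t3 t4 t1 t6 := by
    ext z; unfold EE; ring
  have e2 : NN p q t1 t2 t3 t4 t5 t6 = NN p q t5 t2 t3 t4 t1 t6 := by
    unfold NN
    simp only [mul_comm t2 t1, mul_comm t3 t1, mul_comm t3 t2, mul_comm t4 t1, mul_comm t4 t2, mul_comm t4 t3, mul_comm t5 t1, mul_comm t5 t2, mul_comm t5 t3, mul_comm t5 t4, mul_comm t6 t1, mul_comm t6 t2, mul_comm t6 t3, mul_comm t6 t4, mul_comm t6 t5]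
    ring
  rw [JJ, JJ, II, II, e1, e2]



lemma param_diff {F : ℂ → ℝ → ℂ} {U : Set ℂ} (hU : IsOpen U) {a b : ℝ}
    (hc : ∀ ζ ∈ U, ∀ u, ContinuousAt (Function.uncurry F) (ζ, u))
    (hd : ∀ ζ ∈ U, ∀ u, DifferentiableAt ℂ (fun x => F x u) ζ) {ζ : ℂ} (hζ : ζ ∈ U) :
    DifferentiableAt ℂ (fun x => ∫ u in a..b, F x u) ζ := by
  obtain ⟨ε, hε, hb⟩ := Metric.isOpen_iff.1 hU ζ hζ
  set r := ε / 3 with hr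
  have hr0 : 0 < r := by positivity
  have hsub : Metric.closedBall ζ (2 * r) ⊆ U := by
    refine (Metric.closedBall_subset_ball ?_).trans hb
    rw [hr]; linarith
  have hK : IsCompact (Metric.closedBall ζ (2 * r) ×ˢ Set.uIcc a b) :=
    (isCompact_closedBall _ _).prod isCompact_uIcc
  obtain ⟨C, hC⟩ := hK.exists_bound_of_continuousOn (f := Function.uncurry F) (fun x hx =>
    (hc x.1 (hsub hx.1) x.2).continuousWithinAt)
  have hcu : ∀ x ∈ U, Continuous (F x) := by
    intro x hx
    rw [continuous_iff_continuousAt]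
    intro u
    exact ContinuousAt.comp (f := fun u => (x, u)) (hc x hx u) (by fun_prop)
  refine (intervalIntegral.hasDerivAt_integral_of_dominated_loc_of_deriv_le
    (F' := fun x u => deriv (fun y => F y u) x) (bound := fun _ => C / r)
    (Metric.ball_mem_nhds ζ hr0) ?_ ?_ ?_ ?_ ?_ ?_).2.differentiableAt
  · filter_upwards [hU.mem_nhds hζ] with x hx
    exact (hcu x hx).aestronglyMeasurable
  · exact (hcu ζ hζ).intervalIntegrable _ _
  · have hmem : ∀ n : ℕ, ζ + ((r / (n + 1) : ℝ) : ℂ) ∈ U := by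
      intro n
      apply hsub
      rw [Metric.mem_closedBall, dist_eq_norm, add_sub_cancel_left, Complex.norm_real,
        Real.norm_of_nonneg (by positivity), div_le_iff₀ (by positivity)]
      nlinarith [n.cast_nonneg (α := ℝ)]
    refine aestronglyMeasurable_of_tendsto_ae atTop
      (f := fun (n : ℕ) u => slope (fun y => F y u) ζ (ζ + ((r / (n + 1) : ℝ) : ℂ))) ?_ ?_
    · intro n
      have h1 : Continuous fun u => slope (fun y => F y u) ζ (ζ + ((r / (n + 1) : ℝ) : ℂ)) := by
        simp only [slope, vsub_eq_sub]
        have h2 := (hcu _ (hmem n)).sub (hcu _ hζ)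
        exact h2.const_smul ((ζ + ((r / (n + 1) : ℝ) : ℂ) - ζ)⁻¹)
      exact h1.aestronglyMeasurable
    · refine Eventually.of_forall fun u => ?_
      have h1 := (hd ζ hζ u).hasDerivAt
      rw [hasDerivAt_iff_tendsto_slope] at h1
      refine h1.comp ?_
      rw [tendsto_nhdsWithin_iff]
      constructor
      · have h2 : Tendsto (fun n : ℕ => r * (1 / ((n : ℝ) + 1))) atTop (𝓝 (r * 0)) :=
          (tendsto_one_div_add_atTop_nhds_zero_nat (𝕜 := ℝ)).const_mul r
        have h3 : Continuous fun x : ℝ => ζ + (x : ℂ) := by fun_prop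
        have := (h3.tendsto (r * 0)).comp h2
        simpa [Function.comp_def, div_eq_mul_inv] using this
      · refine Eventually.of_forall fun n => ?_
        have : ((r / (n + 1) : ℝ) : ℂ) ≠ 0 := by
          exact_mod_cast (by positivity : (0 : ℝ) < r / (n + 1)).ne'
        simpa using this
  · refine Eventually.of_forall fun u hu x hx => ?_
    have hx' : dist x ζ < r := hx
    have hsb : Metric.closedBall x r ⊆ Metric.closedBall ζ (2 * r) := by
      apply Metric.closedBall_subset_closedBall'
      linarith
    apply Complex.norm_deriv_le_of_forall_mem_sphere_norm_le hr0
    · apply DifferentiableOn.diffContOnCl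
      intro y hy
      have hy' := Metric.closure_ball_subset_closedBall hy
      exact (hd y (hsub (hsb hy')) u).differentiableWithinAt
    · intro y hy
      exact hC (y, u) ⟨hsb (Metric.sphere_subset_closedBall hy), Set.uIoc_subset_uIcc hu⟩
  · exact intervalIntegrable_const
  · refine Eventually.of_forall fun u hu x hx => ?_
    apply (hd x (hsub _) u).hasDerivAt
    have hx' : dist x ζ < r := hx
    rw [Metric.mem_closedBall]; linarith

lemma gg_param {p q : ℂ} (hp : ‖p‖ < 1) (hq : ‖q‖ < 1) {t : ℂ → ℂ} {ζ : ℂ} {z : ℂ} (hz : ‖z‖ = 1)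
    (ht : DifferentiableAt ℂ t ζ) (h0 : t ζ ≠ 0) (h1 : ‖t ζ‖ < 1) :
    DifferentiableAt ℂ (fun x => gg p q (t x) z) ζ := by
  have hz0 : z ≠ 0 := by rw [← norm_pos_iff, hz]; norm_num
  unfold gg
  have a1 := (egamma_differentiableAt (z := t ζ * z) hp hq (mul_ne_zero h0 hz0)
    (by simpa [hz] using h1)).comp ζ (f := fun x => t x * z) (by fun_prop)
  have a2 := (egamma_differentiableAt (z := t ζ * z⁻¹) hp hq (mul_ne_zero h0 (inv_ne_zero hz0))
    (by simpa [hz] using h1)).comp ζ (f := fun x => t x * z⁻¹) (by fun_prop)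
  exact a1.mul a2

lemma gg_param_cont {p q : ℂ} (hp : ‖p‖ < 1) (hq : ‖q‖ < 1) {t : ℂ → ℂ} {ζ : ℂ} {u : ℝ}
    (ht : ContinuousAt t ζ) (h0 : t ζ ≠ 0) (h1 : ‖t ζ‖ < 1) :
    ContinuousAt (fun x : ℂ × ℝ => gg p q (t x.1) (circleMap 0 1 x.2)) (ζ, u) := by
  have hz : ‖circleMap 0 1 u‖ = 1 := by simp
  have hz0 : circleMap 0 1 u ≠ 0 := by rw [← norm_pos_iff, hz]; norm_num
  unfold gg
  have hcm : ContinuousAt (fun x : ℂ × ℝ => circleMap 0 1 x.2) (ζ, u) :=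
    ((continuous_circleMap 0 1).comp continuous_snd).continuousAt
  have htt : ContinuousAt (fun x : ℂ × ℝ => t x.1) (ζ, u) :=
    ContinuousAt.comp (f := fun x : ℂ × ℝ => x.1) ht continuousAt_fst
  have a1 := ContinuousAt.comp (f := fun x : ℂ × ℝ => t x.1 * circleMap 0 1 x.2) (x := (ζ, u))
    (egamma_differentiableAt (z := t ζ * circleMap 0 1 u) hp hq (mul_ne_zero h0 hz0)
      (by rw [norm_mul, hz, mul_one]; exact h1)).continuousAt (htt.mul hcm)
  have a2 := ContinuousAt.comp (f := fun x : ℂ × ℝ => t x.1 * (circleMap 0 1 x.2)⁻¹) (x := (ζ, u))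
    (egamma_differentiableAt (z := t ζ * (circleMap 0 1 u)⁻¹) hp hq (mul_ne_zero h0 (inv_ne_zero hz0))
      (by rw [norm_mul, norm_inv, hz, inv_one, mul_one]; exact h1)).continuousAt
      (htt.mul (hcm.inv₀ hz0))
  exact a1.mul a2

lemma JJ_param {p q : ℂ} (hp : ‖p‖ < 1) (hp0 : p ≠ 0) (hq : ‖q‖ < 1) (hq0 : q ≠ 0) {U : Set ℂ}
    (hU : IsOpen U) {t1 t2 t3 t4 t5 t6 : ℂ → ℂ}
    (d1 : ∀ x ∈ U, DifferentiableAt ℂ t1 x) (h1 : ∀ x ∈ U, t1 x ≠ 0) (n1 : ∀ x ∈ U, ‖t1 x‖ < 1)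
    (d2 : ∀ x ∈ U, DifferentiableAt ℂ t2 x) (h2 : ∀ x ∈ U, t2 x ≠ 0) (n2 : ∀ x ∈ U, ‖t2 x‖ < 1)
    (d3 : ∀ x ∈ U, DifferentiableAt ℂ t3 x) (h3 : ∀ x ∈ U, t3 x ≠ 0) (n3 : ∀ x ∈ U, ‖t3 x‖ < 1)
    (d4 : ∀ x ∈ U, DifferentiableAt ℂ t4 x) (h4 : ∀ x ∈ U, t4 x ≠ 0) (n4 : ∀ x ∈ U, ‖t4 x‖ < 1)
    (d5 : ∀ x ∈ U, DifferentiableAt ℂ t5 x) (h5 : ∀ x ∈ U, t5 x ≠ 0) (n5 : ∀ x ∈ U, ‖t5 x‖ < 1)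
    (d6 : ∀ x ∈ U, DifferentiableAt ℂ t6 x) (h6 : ∀ x ∈ U, t6 x ≠ 0) (n6 : ∀ x ∈ U, ‖t6 x‖ < 1)
    (hprod : ∀ x ∈ U, t1 x * t2 x * t3 x * t4 x * t5 x * t6 x = p * q) :
    ∀ ζ ∈ U, DifferentiableAt ℂ (fun x => JJ p q (t1 x) (t2 x) (t3 x) (t4 x) (t5 x) (t6 x)) ζ := by
  intro ζ hζ
  have A : DifferentiableAt ℂ (fun x => II p q (t1 x) (t2 x) (t3 x) (t4 x) (t5 x) (t6 x)) ζ := by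
    unfold II circleAverage
    refine DifferentiableAt.const_smul ?_ _
    refine param_diff (F := fun x u => EE p q (t1 x) (t2 x) (t3 x) (t4 x) (t5 x) (t6 x) (circleMap 0 1 u)) hU ?_ ?_ hζ
    · intro x hx u
      have hz : ‖circleMap 0 1 u‖ = 1 := by simp
      have hz0 : circleMap 0 1 u ≠ 0 := by rw [← norm_pos_iff, hz]; norm_num
      have hcm : ContinuousAt (fun x : ℂ × ℝ => circleMap 0 1 x.2) (x, u) :=
        ((continuous_circleMap 0 1).comp continuous_snd).continuousAt
      have b1 := ContinuousAt.comp (f := fun x : ℂ × ℝ => circleMap 0 1 x.2 ^ 2) (x := (x, u))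
        (theta_differentiableAt (z := circleMap 0 1 u ^ 2) hp (pow_ne_zero 2 hz0)).continuousAt
        (hcm.pow 2)
      have b2 := ContinuousAt.comp (f := fun x : ℂ × ℝ => (circleMap 0 1 x.2 ^ 2)⁻¹) (x := (x, u))
        (theta_differentiableAt (z := (circleMap 0 1 u ^ 2)⁻¹) hq
          (inv_ne_zero (pow_ne_zero 2 hz0))).continuousAt
        ((hcm.pow 2).inv₀ (pow_ne_zero 2 hz0))
      have g1 := gg_param_cont (u := u) hp hq (d1 x hx).continuousAt (h1 x hx) (n1 x hx)
      have g2 := gg_param_cont (u := u) hp hq (d2 x hx).continuousAt (h2 x hx) (n2 x hx)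
      have g3 := gg_param_cont (u := u) hp hq (d3 x hx).continuousAt (h3 x hx) (n3 x hx)
      have g4 := gg_param_cont (u := u) hp hq (d4 x hx).continuousAt (h4 x hx) (n4 x hx)
      have g5 := gg_param_cont (u := u) hp hq (d5 x hx).continuousAt (h5 x hx) (n5 x hx)
      have g6 := gg_param_cont (u := u) hp hq (d6 x hx).continuousAt (h6 x hx) (n6 x hx)
      exact (((((g1.mul g2).mul g3).mul g4).mul g5).mul g6).mul (b1.mul b2)
    · intro x hx u
      have hz : ‖circleMap 0 1 u‖ = 1 := by simp
      have g1 := gg_param hp hq hz (d1 x hx) (h1 x hx) (n1 x hx)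
      have g2 := gg_param hp hq hz (d2 x hx) (h2 x hx) (n2 x hx)
      have g3 := gg_param hp hq hz (d3 x hx) (h3 x hx) (n3 x hx)
      have g4 := gg_param hp hq hz (d4 x hx) (h4 x hx) (n4 x hx)
      have g5 := gg_param hp hq hz (d5 x hx) (h5 x hx) (n5 x hx)
      have g6 := gg_param hp hq hz (d6 x hx) (h6 x hx) (n6 x hx)
      exact (((((g1.mul g2).mul g3).mul g4).mul g5).mul g6).mul_const _
  have G : ∀ a b : ℂ → ℂ, DifferentiableAt ℂ a ζ → DifferentiableAt ℂ b ζ → a ζ ≠ 0 → b ζ ≠ 0 →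
      ‖a ζ‖ < 1 → ‖b ζ‖ < 1 → DifferentiableAt ℂ (fun x => egamma (a x * b x) p q) ζ := by
    intro a b ha hb ha0 hb0 na nb
    exact (egamma_differentiableAt hp hq (mul_ne_zero ha0 hb0) (norm_mul_lt na nb)).comp ζ
      (f := fun x => a x * b x) (ha.mul hb)
  have d1' := d1 ζ hζ; have h1' := h1 ζ hζ; have n1' := n1 ζ hζ
  have d2' := d2 ζ hζ; have h2' := h2 ζ hζ; have n2' := n2 ζ hζ
  have d3' := d3 ζ hζ; have h3' := h3 ζ hζ; have n3' := n3 ζ hζ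
  have d4' := d4 ζ hζ; have h4' := h4 ζ hζ; have n4' := n4 ζ hζ
  have d5' := d5 ζ hζ; have h5' := h5 ζ hζ; have n5' := n5 ζ hζ
  have d6' := d6 ζ hζ; have h6' := h6 ζ hζ; have n6' := n6 ζ hζ
  have g12 := G t1 t2 d1' d2' h1' h2' n1' n2'
  have g13 := G t1 t3 d1' d3' h1' h3' n1' n3'
  have g14 := G t1 t4 d1' d4' h1' h4' n1' n4'
  have g15 := G t1 t5 d1' d5' h1' h5' n1' n5'
  have g16 := G t1 t6 d1' d6' h1' h6' n1' n6'
  have g23 := G t2 t3 d2' d3' h2' h3' n2' n3'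
  have g24 := G t2 t4 d2' d4' h2' h4' n2' n4'
  have g25 := G t2 t5 d2' d5' h2' h5' n2' n5'
  have g26 := G t2 t6 d2' d6' h2' h6' n2' n6'
  have g34 := G t3 t4 d3' d4' h3' h4' n3' n4'
  have g35 := G t3 t5 d3' d5' h3' h5' n3' n5'
  have g36 := G t3 t6 d3' d6' h3' h6' n3' n6'
  have g45 := G t4 t5 d4' d5' h4' h5' n4' n5'
  have g46 := G t4 t6 d4' d6' h4' h6' n4' n6'
  have g56 := G t5 t6 d5' d6' h5' h6' n5' n6'
  have B : DifferentiableAt ℂ (fun x => NN p q (t1 x) (t2 x) (t3 x) (t4 x) (t5 x) (t6 x)) ζ := by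
    unfold NN
    exact ((((((((((((((g12.mul g13).mul g14).mul g15).mul g16).mul g23).mul g24).mul g25).mul g26).mul g34).mul g35).mul g36).mul g45).mul g46).mul g56)
  exact A.fun_div B (NN_ne_zero hp hp0 hq hq0 h1' h2' h3' h4' h5' h6' n1' n2' n3' n4' n5' n6' (hprod ζ hζ))


lemma ident_exp {g : ℂ → ℂ} {U : Set ℂ} (hU : IsOpen U) (hc : Convex ℝ U)
    (hg : ∀ x ∈ U, DifferentiableAt ℂ g x) {x0 : ℂ} (hx0 : x0 ∈ U) {c : ℂ}
    (he : ∀ᶠ x in 𝓝 x0, g x = c) : ∀ x ∈ U, g x = c := by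
  have han : AnalyticOnNhd ℂ g U := by
    apply DifferentiableOn.analyticOnNhd _ hU
    intro x hx; exact (hg x hx).differentiableWithinAt
  have := han.eqOn_of_preconnected_of_eventuallyEq (g := fun _ => c) analyticOnNhd_const
    hc.isPreconnected hx0 he
  exact fun x hx => this hx

lemma annulus_const {f : ℂ → ℂ} {q : ℂ} {R : ℝ} (hq0 : q ≠ 0) (hq : ‖q‖ < 1) (hR : 0 < R)
    (hRq : R < ‖q‖) (hd : ∀ x : ℂ, R < ‖x‖ → ‖x‖ < 1 → DifferentiableAt ℂ f x)
    (hs : ∀ x : ℂ, ‖x‖ < 1 → R < ‖q * x‖ → f (q * x) = f x) :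
    ∀ x y : ℂ, R < ‖x‖ → ‖x‖ < 1 → R < ‖y‖ → ‖y‖ < 1 → f x = f y := by
  have hqp : 0 < ‖q‖ := norm_pos_iff.2 hq0
  obtain ⟨ρ, hρ1, hρ2⟩ : ∃ ρ : ℝ, R / ‖q‖ < ρ ∧ ρ < 1 := exists_between (by
    rw [div_lt_one hqp]; exact hRq)
  have hρR : R < ρ * ‖q‖ := (div_lt_iff₀ hqp).1 hρ1
  have hρ0 : 0 < ρ := lt_trans (by positivity) hρ1
  set K : Set ℂ := {x | ρ * ‖q‖ ≤ ‖x‖} ∩ Metric.closedBall 0 ρ with hK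
  have hKc : IsCompact K := (isCompact_closedBall 0 ρ).inter_left
    (isClosed_le continuous_const continuous_norm)
  have hKn : K.Nonempty := ⟨(ρ : ℂ), by
    simp only [Set.mem_setOf_eq, Complex.norm_real, Real.norm_of_nonneg hρ0.le]; nlinarith, by
    simp [abs_of_pos hρ0]⟩
  have hKA : ∀ x ∈ K, R < ‖x‖ ∧ ‖x‖ < 1 := by
    rintro x ⟨h1, h2⟩
    rw [mem_closedBall_zero_iff] at h2
    exact ⟨lt_of_lt_of_le hρR h1, lt_of_le_of_lt h2 hρ2⟩
  obtain ⟨x0, hx0, hmax⟩ := hKc.exists_isMaxOn hKn (f := fun x => ‖f x‖) (fun x hx =>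
    (hd x (hKA x hx).1 (hKA x hx).2).continuousAt.norm.continuousWithinAt)
  have hx0' := hKA x0 hx0
  have hx01 : ρ * ‖q‖ ≤ ‖x0‖ := hx0.1
  have hx02 : ‖x0‖ ≤ ρ := by have := hx0.2; rwa [mem_closedBall_zero_iff] at this
  have hAo : IsOpen {x : ℂ | R < ‖x‖ ∧ ‖x‖ < 1} :=
    (isOpen_lt continuous_const continuous_norm).inter (isOpen_lt continuous_norm continuous_const)
  have hloc : IsLocalMax (norm ∘ f) x0 := by
    have e1 : ∀ᶠ x in 𝓝 x0, R < ‖x‖ ∧ ‖x‖ < 1 := hAo.mem_nhds hx0'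
    have e2 : ∀ᶠ x : ℂ in 𝓝 x0, ρ * ‖q‖ * ‖q‖ < ‖x‖ :=
      (isOpen_lt continuous_const continuous_norm).mem_nhds (by
        simp only [Set.mem_setOf_eq]
        nlinarith [mul_pos hρ0 hqp])
    have e3 : ∀ᶠ x : ℂ in 𝓝 x0, ‖q‖ * ‖x‖ < ρ :=
      (isOpen_lt (f := fun x : ℂ => ‖q‖ * ‖x‖) (by fun_prop) continuous_const).mem_nhds (by
        show ‖q‖ * ‖x0‖ < ρ
        nlinarith [norm_nonneg x0])
    filter_upwards [e1, e2, e3] with x h1 h2 h3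
    simp only [Function.comp_apply]
    rcases lt_or_ge ‖x‖ (ρ * ‖q‖) with h | h
    · have hxq : q * (q⁻¹ * x) = x := by field_simp
      have hn : ‖q⁻¹ * x‖ = ‖x‖ / ‖q‖ := by rw [norm_mul, norm_inv]; ring
      have hn1 : ‖q⁻¹ * x‖ < ρ := by rw [hn, div_lt_iff₀ hqp]; exact h
      have := hs (q⁻¹ * x) (hn1.trans hρ2) (by rw [hxq]; exact h1.1)
      rw [hxq] at this
      rw [this]
      refine hmax ⟨?_, ?_⟩
      · simp only [Set.mem_setOf_eq]
        rw [hn, le_div_iff₀ hqp]; exact h2.le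
      · rw [mem_closedBall_zero_iff]; exact hn1.le
    · rcases le_or_gt ‖x‖ ρ with h' | h'
      · exact hmax ⟨h, by rw [mem_closedBall_zero_iff]; exact h'⟩
      · have hqx : ρ * ‖q‖ ≤ ‖q * x‖ := by rw [norm_mul]; nlinarith
        rw [← hs x h1.2 (lt_of_lt_of_le hρR hqx)]
        refine hmax ⟨hqx, ?_⟩
        rw [mem_closedBall_zero_iff, norm_mul]; exact h3.le
  have hev : ∀ᶠ y in 𝓝 x0, f y = f x0 := by
    apply Complex.eventually_eq_of_isLocalMax_norm _ hloc
    filter_upwards [hAo.mem_nhds hx0'] with x hx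
    exact hd x hx.1 hx.2
  suffices h : ∀ x : ℂ, R < ‖x‖ → ‖x‖ < 1 → f x = f x0 by
    intro x y h1 h2 h3 h4
    rw [h x h1 h2, h y h3 h4]
  have nz : ∀ x : ℂ, R < ‖x‖ → x ≠ 0 := fun x hx => norm_pos_iff.1 (hR.trans hx)
  have hUo : IsOpen {x : ℂ | Real.log R < x.re ∧ x.re < 0} :=
    (isOpen_lt continuous_const Complex.continuous_re).inter
      (isOpen_lt Complex.continuous_re continuous_const)
  have hUc : Convex ℝ {x : ℂ | Real.log R < x.re ∧ x.re < 0} :=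
    (convex_halfSpace_re_gt _).inter (convex_halfSpace_re_lt _)
  have hmem : ∀ x : ℂ, R < ‖x‖ → ‖x‖ < 1 → Complex.log x ∈ {x : ℂ | Real.log R < x.re ∧ x.re < 0} := by
    intro x h1 h2
    simp only [Set.mem_setOf_eq, Complex.log_re]
    exact ⟨Real.log_lt_log hR h1, Real.log_neg (hR.trans h1) h2⟩
  have key := ident_exp (g := fun x => f (Complex.exp x)) (c := f x0) hUo hUc (by
    rintro x ⟨h1, h2⟩
    have a1 : R < ‖Complex.exp x‖ := by
      rw [Complex.norm_exp]; exact (Real.log_lt_iff_lt_exp hR).1 h1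
    have a2 : ‖Complex.exp x‖ < 1 := by
      rw [Complex.norm_exp]; exact Real.exp_lt_one_iff.2 h2
    exact (hd _ a1 a2).comp x Complex.differentiable_exp.differentiableAt)
    (hmem x0 hx0'.1 hx0'.2) (by
      have : Tendsto Complex.exp (𝓝 (Complex.log x0)) (𝓝 x0) := by
        have := Complex.continuous_exp.tendsto (Complex.log x0)
        rwa [Complex.exp_log (nz x0 hx0'.1)] at this
      exact this.eventually hev)
  intro x h1 h2
  have := key _ (hmem x h1 h2)
  rwa [Complex.exp_log (nz x h1)] at this

noncomputable def J5 (p q t1 t2 t3 t4 t5 : ℂ) : ℂ :=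
  JJ p q t1 t2 t3 t4 t5 (p * q * (t1 * t2 * t3 * t4 * t5)⁻¹)

lemma J5_indep {p q t2 t3 t4 t5 : ℂ} (hp : ‖p‖ < 1) (hp0 : p ≠ 0) (hq : ‖q‖ < 1) (hq0 : q ≠ 0)
    (h2 : t2 ≠ 0) (h3 : t3 ≠ 0) (h4 : t4 ≠ 0) (h5 : t5 ≠ 0)
    (n2 : ‖t2‖ < 1) (n3 : ‖t3‖ < 1) (n4 : ‖t4‖ < 1) (n5 : ‖t5‖ < 1)
    (hB : ‖p‖ < ‖t2 * t3 * t4 * t5‖) {x y : ℂ} (hx : ‖x‖ < 1) (hy : ‖y‖ < 1)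
    (hx' : ‖p * q‖ < ‖x * t2 * t3 * t4 * t5‖) (hy' : ‖p * q‖ < ‖y * t2 * t3 * t4 * t5‖) :
    J5 p q x t2 t3 t4 t5 = J5 p q y t2 t3 t4 t5 := by
  set B := t2 * t3 * t4 * t5 with hBd
  have hB0 : B ≠ 0 := by rw [hBd]; positivity
  have hBp : 0 < ‖B‖ := norm_pos_iff.2 hB0
  have hqp : 0 < ‖q‖ := norm_pos_iff.2 hq0
  have hpp : 0 < ‖p‖ := norm_pos_iff.2 hp0
  have hR : 0 < ‖p * q‖ / ‖B‖ := div_pos (norm_pos_iff.2 (mul_ne_zero hp0 hq0)) hBp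
  have eB : ∀ x : ℂ, ‖x * t2 * t3 * t4 * t5‖ = ‖x‖ * ‖B‖ := by
    intro x; rw [← norm_mul, hBd]; congr 1; ring
  have e1 : ∀ x : ℂ, x * t2 * t3 * t4 * t5 = x * B := fun x => by rw [hBd]; ring
  refine annulus_const (f := fun x => J5 p q x t2 t3 t4 t5) hq0 hq hR ?_ ?_ ?_ x y ?_ hx ?_ hy
  · rw [norm_mul, div_lt_iff₀ hBp]; nlinarith
  · intro x h1 h2'
    rw [div_lt_iff₀ hBp] at h1
    have hUo : IsOpen {x : ℂ | ‖p * q‖ < ‖x‖ * ‖B‖ ∧ ‖x‖ < 1} :=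
      (isOpen_lt continuous_const (continuous_norm.mul continuous_const)).inter
        (isOpen_lt continuous_norm continuous_const)
    have nz : ∀ x ∈ {x : ℂ | ‖p * q‖ < ‖x‖ * ‖B‖ ∧ ‖x‖ < 1}, x ≠ 0 := by
      rintro x ⟨h, -⟩ rfl
      simp only [norm_zero, zero_mul] at h
      exact absurd h (not_lt.2 (norm_nonneg _))
    refine JJ_param (t1 := fun x => x) (t2 := fun _ => t2) (t3 := fun _ => t3) (t4 := fun _ => t4)
      (t5 := fun _ => t5) (t6 := fun x => p * q * (x * t2 * t3 * t4 * t5)⁻¹) hp hp0 hq hq0 hUo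
      (fun _ _ => differentiableAt_id) nz (fun x hx => hx.2)
      (fun _ _ => differentiableAt_const _) (fun _ _ => h2) (fun _ _ => n2)
      (fun _ _ => differentiableAt_const _) (fun _ _ => h3) (fun _ _ => n3)
      (fun _ _ => differentiableAt_const _) (fun _ _ => h4) (fun _ _ => n4)
      (fun _ _ => differentiableAt_const _) (fun _ _ => h5) (fun _ _ => n5) ?_ ?_ ?_ ?_ x ⟨h1, h2'⟩
    · intro x hx
      have := nz x hx
      have : x * t2 * t3 * t4 * t5 ≠ 0 := by positivity
      fun_prop (disch := assumption)
    · intro x hx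
      have := nz x hx
      positivity
    · intro x hx
      have h0 := nz x hx
      rw [norm_mul, norm_inv, eB, ← div_eq_mul_inv, div_lt_one (by positivity)]
      exact hx.1
    · intro x hx
      have h0 := nz x hx
      field_simp
  · intro x h1 h2'
    rw [div_lt_iff₀ hBp] at h2'
    have hx0 : x ≠ 0 := by
      rintro rfl
      simp only [norm_zero, zero_mul, mul_zero] at h2'
      exact absurd h2' (not_lt.2 (norm_nonneg _))
    have hk : ‖p‖ < ‖x‖ * ‖B‖ := by
      rw [norm_mul, norm_mul] at h2'
      have h3 : ‖q‖ * ‖p‖ < ‖q‖ * (‖x‖ * ‖B‖) := by linarith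
      exact lt_of_mul_lt_mul_left h3 hqp.le
    have s := JJ_shift (t1 := x) (t6 := p * (x * t2 * t3 * t4 * t5)⁻¹) hp hp0 hq hq0 hx0 h2 h3 h4 h5
      (by positivity) h1 n2 n3 n4 n5 (by
        rw [norm_mul, norm_inv, eB, ← div_eq_mul_inv, div_lt_one (by positivity)]
        exact hk) (by field_simp)
    simp only [J5]
    have a1 : p * q * (q * x * t2 * t3 * t4 * t5)⁻¹ = p * (x * t2 * t3 * t4 * t5)⁻¹ := by field_simp
    have a2 : p * q * (x * t2 * t3 * t4 * t5)⁻¹ = q * (p * (x * t2 * t3 * t4 * t5)⁻¹) := by field_simp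
    rw [a1, a2, s]
  · rw [div_lt_iff₀ hBp, ← eB]; exact hx'
  · rw [div_lt_iff₀ hBp, ← eB]; exact hy'


lemma J5_swap2 (p q t1 t2 t3 t4 t5 : ℂ) : J5 p q t1 t2 t3 t4 t5 = J5 p q t2 t1 t3 t4 t5 := by
  unfold J5
  rw [JJ_swap2, mul_comm t1 t2]

lemma J5_swap3 (p q t1 t2 t3 t4 t5 : ℂ) : J5 p q t1 t2 t3 t4 t5 = J5 p q t3 t2 t1 t4 t5 := by
  unfold J5
  rw [JJ_swap3, show t1 * t2 * t3 * t4 * t5 = t3 * t2 * t1 * t4 * t5 by ring]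

lemma J5_swap4 (p q t1 t2 t3 t4 t5 : ℂ) : J5 p q t1 t2 t3 t4 t5 = J5 p q t4 t2 t3 t1 t5 := by
  unfold J5
  rw [JJ_swap4, show t1 * t2 * t3 * t4 * t5 = t4 * t2 * t3 * t1 * t5 by ring]

lemma J5_swap5 (p q t1 t2 t3 t4 t5 : ℂ) : J5 p q t1 t2 t3 t4 t5 = J5 p q t5 t2 t3 t4 t1 := by
  unfold J5
  rw [JJ_swap5, show t1 * t2 * t3 * t4 * t5 = t5 * t2 * t3 * t4 * t1 by ring]

lemma J5_const {p q : ℂ} (hp : ‖p‖ < 1) (hp0 : p ≠ 0) (hq : ‖q‖ < 1) (hq0 : q ≠ 0) {ρ : ℝ}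
    (hρ : 0 < ρ) (hρ1 : ρ < 1) (hρ5 : ‖p‖ ≤ ρ ^ 5) {t1 t2 t3 t4 t5 b : ℂ}
    (a1 : ρ < ‖t1‖) (a2 : ρ < ‖t2‖) (a3 : ρ < ‖t3‖) (a4 : ρ < ‖t4‖) (a5 : ρ < ‖t5‖)
    (n1 : ‖t1‖ < 1) (n2 : ‖t2‖ < 1) (n3 : ‖t3‖ < 1) (n4 : ‖t4‖ < 1) (n5 : ‖t5‖ < 1)
    (ab : ρ < ‖b‖) (nb : ‖b‖ < 1) :
    J5 p q t1 t2 t3 t4 t5 = J5 p q b b b b b := by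
  have nz : ∀ t : ℂ, ρ < ‖t‖ → t ≠ 0 := fun t h => norm_pos_iff.1 (hρ.trans h)
  have K : ∀ x y t2 t3 t4 t5 : ℂ, ρ < ‖x‖ → ‖x‖ < 1 → ρ < ‖y‖ → ‖y‖ < 1 →
      ρ < ‖t2‖ → ‖t2‖ < 1 → ρ < ‖t3‖ → ‖t3‖ < 1 → ρ < ‖t4‖ → ‖t4‖ < 1 → ρ < ‖t5‖ → ‖t5‖ < 1 →
      J5 p q x t2 t3 t4 t5 = J5 p q y t2 t3 t4 t5 := by
    intro x y t2 t3 t4 t5 ax nx ay ny a2 n2 a3 n3 a4 n4 a5 n5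
    have B : ρ ^ 4 < ‖t2 * t3 * t4 * t5‖ := by
      rw [norm_mul, norm_mul, norm_mul, show ρ ^ 4 = ρ * ρ * ρ * ρ by ring]
      gcongr
    have X : ∀ x : ℂ, ρ < ‖x‖ → ‖p * q‖ < ‖x * t2 * t3 * t4 * t5‖ := by
      intro x ax
      rw [show x * t2 * t3 * t4 * t5 = x * (t2 * t3 * t4 * t5) by ring, norm_mul x, norm_mul p]
      have : ρ ^ 5 < ‖x‖ * ‖t2 * t3 * t4 * t5‖ := by
        rw [show ρ ^ 5 = ρ * ρ ^ 4 by ring]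
        gcongr
      have : ‖p‖ * ‖q‖ ≤ ‖p‖ := by nlinarith [norm_nonneg p]
      linarith
    refine J5_indep hp hp0 hq hq0 (nz _ a2) (nz _ a3) (nz _ a4) (nz _ a5) n2 n3 n4 n5 ?_ nx ny
      (X x ax) (X y ay)
    have : ρ ^ 5 ≤ ρ ^ 4 := pow_le_pow_of_le_one hρ.le hρ1.le (by norm_num)
    linarith
  calc J5 p q t1 t2 t3 t4 t5 = J5 p q b t2 t3 t4 t5 := by apply K <;> assumption
    _ = J5 p q t2 b t3 t4 t5 := J5_swap2 ..
    _ = J5 p q b b t3 t4 t5 := by apply K <;> assumption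
    _ = J5 p q t3 b b t4 t5 := J5_swap3 ..
    _ = J5 p q b b b t4 t5 := by apply K <;> assumption
    _ = J5 p q t4 b b b t5 := J5_swap4 ..
    _ = J5 p q b b b b t5 := by apply K <;> assumption
    _ = J5 p q t5 b b b b := J5_swap5 ..
    _ = J5 p q b b b b b := by apply K <;> assumption

lemma JJ_const {p q : ℂ} (hp : ‖p‖ < 1) (hp0 : p ≠ 0) (hq : ‖q‖ < 1) (hq0 : q ≠ 0) :
    ∃ c : ℂ, ∀ t1 t2 t3 t4 t5 t6 : ℂ, t1 ≠ 0 → t2 ≠ 0 → t3 ≠ 0 → t4 ≠ 0 → t5 ≠ 0 → t6 ≠ 0 →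
      ‖t1‖ < 1 → ‖t2‖ < 1 → ‖t3‖ < 1 → ‖t4‖ < 1 → ‖t5‖ < 1 → ‖t6‖ < 1 →
      t1 * t2 * t3 * t4 * t5 * t6 = p * q → JJ p q t1 t2 t3 t4 t5 t6 = c := by
  have hpp : 0 < ‖p‖ := norm_pos_iff.2 hp0
  set ρ : ℝ := ‖p‖ ^ ((1:ℝ) / 5) with hρd
  have hρ : 0 < ρ := Real.rpow_pos_of_pos hpp _
  have hρ1 : ρ < 1 := Real.rpow_lt_one hpp.le hp (by norm_num)
  have hρ5 : ‖p‖ ≤ ρ ^ 5 := by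
    rw [hρd, ← Real.rpow_natCast, ← Real.rpow_mul hpp.le]; norm_num
  obtain ⟨b, hb1, hb2⟩ := exists_between hρ1
  have nb : ‖(b : ℂ)‖ = b := by rw [Complex.norm_real, Real.norm_of_nonneg (by linarith)]
  refine ⟨J5 p q b b b b b, ?_⟩
  intro t1 t2 t3 t4 t5 t6 h1 h2 h3 h4 h5 h6 n1 n2 n3 n4 n5 n6 hprod
  -- path
  have F : ∀ t : ℂ, t ≠ 0 → ‖t‖ < 1 → ∃ l : ℝ, l < 0 ∧ ‖t‖ = Real.exp l := fun t h n =>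
    ⟨Real.log ‖t‖, Real.log_neg (norm_pos_iff.2 h) n, (Real.exp_log (norm_pos_iff.2 h)).symm⟩
  obtain ⟨l1, m1, e1⟩ := F t1 h1 n1
  obtain ⟨l2, m2, e2⟩ := F t2 h2 n2
  obtain ⟨l3, m3, e3⟩ := F t3 h3 n3
  obtain ⟨l4, m4, e4⟩ := F t4 h4 n4
  obtain ⟨l5, m5, e5⟩ := F t5 h5 n5
  obtain ⟨l6, m6, e6⟩ := F t6 h6 n6
  set P : ℂ → ℝ → ℂ → ℂ := fun t l x => t * Complex.exp (-(l * x)) with hP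
  have Pn : ∀ t l x, ‖t‖ = Real.exp l → ‖P t l x‖ = Real.exp (l - l * x.re) := by
    intro t l x h
    simp only [hP]
    rw [norm_mul, Complex.norm_exp, h, ← Real.exp_add]
    simp [sub_eq_add_neg]
  have Pd : ∀ t l x, DifferentiableAt ℂ (P t l) x := by
    intro t l x
    simp only [hP]
    fun_prop
  have P0 : ∀ t l x, t ≠ 0 → P t l x ≠ 0 := fun t l x h => mul_ne_zero h (Complex.exp_ne_zero _)
  set L := l1 + l2 + l3 + l4 + l5 with hL
  have hL0 : L < 0 := by rw [hL]; linarith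
  set T6 : ℂ → ℂ := fun x => t6 * Complex.exp (L * x) with hT6
  have T6n : ∀ x, ‖T6 x‖ = Real.exp (l6 + L * x.re) := by
    intro x
    simp only [hT6]
    rw [norm_mul, Complex.norm_exp, e6, ← Real.exp_add]
    simp
  have Tp : ∀ x, P t1 l1 x * P t2 l2 x * P t3 l3 x * P t4 l4 x * P t5 l5 x * T6 x = p * q := by
    intro x
    rw [← hprod]
    simp only [hP, hT6]
    have : Complex.exp (-(l1 * x)) * Complex.exp (-(l2 * x)) * Complex.exp (-(l3 * x)) *
      Complex.exp (-(l4 * x)) * Complex.exp (-(l5 * x)) * Complex.exp (L * x) = 1 := by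
      simp only [← Complex.exp_add]
      rw [hL]; push_cast
      rw [← Complex.exp_zero]; congr 1; ring
    linear_combination (t1 * t2 * t3 * t4 * t5 * t6) * this
  have T60 : ∀ x, T6 x ≠ 0 := fun x => mul_ne_zero h6 (Complex.exp_ne_zero _)
  set U : Set ℂ := {x : ℂ | x.re < 1 ∧ l6 / (-L) < x.re} with hU
  have hUo : IsOpen U := (isOpen_lt Complex.continuous_re continuous_const).inter
    (isOpen_lt continuous_const Complex.continuous_re)
  have hUc : Convex ℝ U := (convex_halfSpace_re_lt _).inter (convex_halfSpace_re_gt _)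
  have hneg : l6 / (-L) < 0 := div_neg_of_neg_of_pos m6 (by linarith)
  have Pn1 : ∀ t l x, ‖t‖ = Real.exp l → l < 0 → x ∈ U → ‖P t l x‖ < 1 := by
    intro t l x h hl hx
    rw [Pn t l x h, Real.exp_lt_one_iff]
    nlinarith [hx.1]
  have Tn1 : ∀ x ∈ U, ‖T6 x‖ < 1 := by
    intro x hx
    rw [T6n, Real.exp_lt_one_iff]
    have := (div_lt_iff₀ (by linarith)).1 hx.2
    linarith
  have hd := JJ_param (t1 := P t1 l1) (t2 := P t2 l2) (t3 := P t3 l3) (t4 := P t4 l4)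
      (t5 := P t5 l5) (t6 := T6) hp hp0 hq hq0 hUo
      (fun x _ => Pd _ _ x) (fun x _ => P0 _ _ x h1) (fun x hx => Pn1 _ _ x e1 m1 hx)
      (fun x _ => Pd _ _ x) (fun x _ => P0 _ _ x h2) (fun x hx => Pn1 _ _ x e2 m2 hx)
      (fun x _ => Pd _ _ x) (fun x _ => P0 _ _ x h3) (fun x hx => Pn1 _ _ x e3 m3 hx)
      (fun x _ => Pd _ _ x) (fun x _ => P0 _ _ x h4) (fun x hx => Pn1 _ _ x e4 m4 hx)
      (fun x _ => Pd _ _ x) (fun x _ => P0 _ _ x h5) (fun x hx => Pn1 _ _ x e5 m5 hx)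
      (by intro x _; simp only [hT6]; fun_prop) (fun x _ => T60 x) Tn1 (fun x _ => Tp x)
  -- near 1
  have Pl : ∀ t l, ‖t‖ = Real.exp l → ∀ᶠ x in 𝓝 (1:ℂ), ρ < ‖P t l x‖ := by
    intro t l h
    have hc : ContinuousAt (fun x => ‖P t l x‖) 1 := (Pd t l 1).continuousAt.norm
    refine hc.eventually_const_lt ?_
    show ρ < ‖P t l 1‖
    rw [Pn t l 1 h]; simp [hρ1]
  have hall := ((Pl t1 l1 e1).and ((Pl t2 l2 e2).and ((Pl t3 l3 e3).and ((Pl t4 l4 e4).and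
    (Pl t5 l5 e5)))))
  obtain ⟨ε, hε, hball⟩ := Metric.eventually_nhds_iff.1 hall
  set δ : ℝ := min ε 1 / 2 with hδ
  have hδ0 : 0 < δ := by rw [hδ]; positivity
  have hδ1 : δ < ε := by rw [hδ]; have := min_le_left ε 1; linarith
  have hδ2 : δ < 1 := by rw [hδ]; have := min_le_right ε 1; linarith
  have hmem : ((1 - δ : ℝ) : ℂ) ∈ U := by
    simp only [hU, Set.mem_setOf_eq, Complex.ofReal_re]
    exact ⟨by linarith, by linarith⟩
  have hdist : dist ((1 - δ : ℝ) : ℂ) 1 < ε := by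
    rw [dist_eq_norm]
    push_cast
    rw [show (1 - (δ:ℂ) - 1) = ((-δ : ℝ) : ℂ) by push_cast; ring, Complex.norm_real, norm_neg,
      Real.norm_of_nonneg hδ0.le]
    exact hδ1
  have key := ident_exp hUo hUc hd hmem (c := J5 p q b b b b b) (by
    filter_upwards [hUo.mem_nhds hmem, Metric.isOpen_ball.mem_nhds hdist] with x hx hx'
    obtain ⟨a1, a2, a3, a4, a5⟩ := hball hx'
    rw [← J5_const hp hp0 hq hq0 hρ hρ1 hρ5 a1 a2 a3 a4 a5 (Pn1 _ _ x e1 m1 hx)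
      (Pn1 _ _ x e2 m2 hx) (Pn1 _ _ x e3 m3 hx) (Pn1 _ _ x e4 m4 hx) (Pn1 _ _ x e5 m5 hx)
      (by rw [nb]; exact hb1) (by rw [nb]; exact hb2)]
    unfold J5
    have : T6 x = p * q * (P t1 l1 x * P t2 l2 x * P t3 l3 x * P t4 l4 x * P t5 l5 x)⁻¹ := by
      rw [← Tp x, mul_comm _ (T6 x), mul_assoc, mul_inv_cancel₀, mul_one]
      have := P0 t1 l1 x h1
      have := P0 t2 l2 x h2
      have := P0 t3 l3 x h3
      have := P0 t4 l4 x h4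
      have := P0 t5 l5 x h5
      positivity
    rw [this])
  have := key 0 ⟨by simp, by simpa using hneg⟩
  simpa [hP, hT6] using this


noncomputable def KR (a : ℝ) (z : ℂ) : ℝ := (1 - a ^ 4) / ‖1 + (a : ℂ) ^ 2 * z ^ 2‖ ^ 2

lemma KR_den {a : ℝ} (ha0 : 0 ≤ a) (ha1 : a < 1) {z : ℂ} (hz : ‖z‖ ≤ 1) :
    1 + (a : ℂ) ^ 2 * z ^ 2 ≠ 0 := by
  intro h
  have h1 : ‖(a : ℂ) ^ 2 * z ^ 2‖ = 1 := by
    rw [show (a : ℂ) ^ 2 * z ^ 2 = -1 by linear_combination h]; simp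
  rw [norm_mul, norm_pow, norm_pow, Complex.norm_real, Real.norm_of_nonneg ha0] at h1
  have : a ^ 2 < 1 := by nlinarith
  have : ‖z‖ ^ 2 ≤ 1 := by nlinarith [norm_nonneg z]
  nlinarith [sq_nonneg a, sq_nonneg ‖z‖]

lemma KR_re {a : ℝ} (ha0 : 0 ≤ a) (ha1 : a < 1) {z : ℂ} (hz : ‖z‖ = 1) :
    KR a z = ((1 - (a : ℂ) ^ 2 * z ^ 2) / (1 + (a : ℂ) ^ 2 * z ^ 2)).re := by
  have hd := KR_den ha0 ha1 hz.le
  set w := (a : ℂ) ^ 2 * z ^ 2 with hw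
  have hn : ‖w‖ = a ^ 2 := by
    rw [hw, norm_mul, norm_pow, norm_pow, Complex.norm_real, Real.norm_of_nonneg ha0, hz]; ring
  have hn2 : w.re * w.re + w.im * w.im = a ^ 4 := by
    rw [← Complex.normSq_apply, Complex.normSq_eq_norm_sq, hn]; ring
  rw [Complex.div_re, KR, ← hw, ← Complex.normSq_eq_norm_sq]
  have : Complex.normSq (1 + w) ≠ 0 := by simpa using hd
  field_simp
  simp
  nlinarith

lemma KR_cont {a : ℝ} (ha0 : 0 ≤ a) (ha1 : a < 1) {z : ℂ} (hz : ‖z‖ = 1) :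
    ContinuousAt (KR a) z := by
  have hd := KR_den ha0 ha1 hz.le
  unfold KR
  have : ‖1 + (a : ℂ) ^ 2 * z ^ 2‖ ^ 2 ≠ 0 := by positivity
  fun_prop (disch := assumption)

lemma KR_int {a : ℝ} (ha0 : 0 ≤ a) (ha1 : a < 1) : CircleIntegrable (KR a) 0 1 := by
  apply ContinuousOn.circleIntegrable zero_le_one
  intro z hz
  exact (KR_cont ha0 ha1 (by simpa using hz)).continuousWithinAt

lemma KR_nonneg {a : ℝ} (ha0 : 0 ≤ a) (ha1 : a < 1) (z : ℂ) : 0 ≤ KR a z := by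
  unfold KR
  have : a ^ 4 ≤ 1 := pow_le_one₀ ha0 ha1.le
  have : 0 ≤ 1 - a ^ 4 := by linarith
  positivity

lemma KR_avg {a : ℝ} (ha0 : 0 ≤ a) (ha1 : a < 1) : circleAverage (KR a) 0 1 = 1 := by
  set h : ℂ → ℂ := fun z => (1 - (a : ℂ) ^ 2 * z ^ 2) / (1 + (a : ℂ) ^ 2 * z ^ 2) with hh
  have hd : ∀ z : ℂ, ‖z‖ ≤ 1 → DifferentiableAt ℂ h z := by
    intro z hz
    have := KR_den ha0 ha1 hz
    simp only [hh]
    fun_prop (disch := assumption)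
  have e1 : circleAverage (KR a) 0 1 = circleAverage (Complex.reCLM ∘ h) 0 1 := by
    apply circleAverage_congr_sphere
    intro z hz
    exact KR_re ha0 ha1 (by simpa using hz)
  have hi : CircleIntegrable h 0 1 := cav_integrable fun z hz => (hd z hz.le).continuousAt
  have e2 : circleAverage h 0 1 = h 0 := by
    apply circleAverage_of_differentiable_on_off_countable Set.countable_empty
    · intro z hz
      exact (hd z (by simpa using hz)).continuousAt.continuousWithinAt
    · intro z hz
      exact hd z (by have := hz.1; simp at this; exact this.le)
  rw [e1, Complex.reCLM.circleAverage_comp_comm hi, e2]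
  simp [hh]

lemma cav_norm_le {f : ℂ → ℂ} {g : ℂ → ℝ} (hg : CircleIntegrable g 0 1)
    (h : ∀ z : ℂ, ‖z‖ = 1 → ‖f z‖ ≤ g z) : ‖circleAverage f 0 1‖ ≤ circleAverage g 0 1 := by
  unfold circleAverage
  rw [norm_smul, smul_eq_mul, Real.norm_of_nonneg (by positivity)]
  gcongr
  apply intervalIntegral.norm_integral_le_of_norm_le (by positivity) _ hg
  exact Filter.Eventually.of_forall fun u _ => h _ (by simp)

lemma KR_bound {a : ℝ} (ha0 : 0 ≤ a) (ha1 : a < 1) {z : ℂ} (hz : ‖z‖ = 1) :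
    KR a z * ‖1 + z ^ 2‖ ^ 2 ≤ 4 * (1 - a ^ 4) := by
  have hd := KR_den ha0 ha1 hz.le
  have hb : ‖1 + z ^ 2‖ ≤ 2 * ‖1 + (a : ℂ) ^ 2 * z ^ 2‖ := by
    have e : 1 + z ^ 2 = (1 + (a : ℂ) ^ 2 * z ^ 2) + ((1 - a ^ 2 : ℝ) : ℂ) * z ^ 2 := by
      push_cast; ring
    have h1 : ‖((1 - a ^ 2 : ℝ) : ℂ) * z ^ 2‖ = 1 - a ^ 2 := by
      rw [norm_mul, norm_pow, hz, Complex.norm_real, Real.norm_of_nonneg (by nlinarith)]; ring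
    have h2 : 1 - a ^ 2 ≤ ‖1 + (a : ℂ) ^ 2 * z ^ 2‖ := by
      have := norm_sub_norm_le (1 : ℂ) (-((a : ℂ) ^ 2 * z ^ 2))
      rw [norm_neg, norm_mul, norm_pow, norm_pow, Complex.norm_real, Real.norm_of_nonneg ha0, hz,
        sub_neg_eq_add] at this
      simpa using this
    have h3 := norm_add_le (1 + (a : ℂ) ^ 2 * z ^ 2) (((1 - a ^ 2 : ℝ) : ℂ) * z ^ 2)
    rw [← e, h1] at h3
    linarith
  have hp : 0 < ‖1 + (a : ℂ) ^ 2 * z ^ 2‖ := norm_pos_iff.2 hd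
  have : a ^ 4 ≤ 1 := pow_le_one₀ ha0 ha1.le
  unfold KR
  rw [div_mul_eq_mul_div, div_le_iff₀ (by positivity)]
  have h3 : ‖1 + z ^ 2‖ ^ 2 ≤ (2 * ‖1 + (a : ℂ) ^ 2 * z ^ 2‖) ^ 2 := by gcongr
  nlinarith [mul_le_mul_of_nonneg_left h3 (show 0 ≤ 1 - a ^ 4 by linarith)]

lemma poisson_lim {G : ℝ → ℂ → ℂ} {a0 : ℝ} (h0 : 0 ≤ a0) (h1 : a0 < 1) {g : ℂ}
    (hG : ContinuousOn (fun x : ℝ × ℂ => G x.1 x.2) (Set.Icc a0 1 ×ˢ Metric.sphere (0:ℂ) 1))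
    (hi : G 1 Complex.I = g) (hi' : G 1 (-Complex.I) = g) :
    Tendsto (fun a => circleAverage (fun z => (KR a z : ℂ) * G a z) 0 1) (𝓝[<] 1) (𝓝 g) := by
  set S : Set (ℝ × ℂ) := Set.Icc a0 1 ×ˢ Metric.sphere (0:ℂ) 1 with hS
  have hSc : IsCompact S := isCompact_Icc.prod (isCompact_sphere 0 1)
  have hH : ContinuousOn (fun x : ℝ × ℂ => ‖G x.1 x.2 - g‖) S := (hG.sub continuousOn_const).norm
  obtain ⟨M, hM⟩ := (hSc.bddAbove_image hH)
  have hM' : ∀ x ∈ S, ‖G x.1 x.2 - g‖ ≤ M := fun x hx => hM (Set.mem_image_of_mem _ hx)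
  rw [Metric.tendsto_nhds]
  intro ε hε
  set φ : ℝ × ℂ → ℝ := fun x => ‖1 + x.2 ^ 2‖ ^ 2 + (1 - x.1) with hφ
  have hφc : Continuous φ := by simp only [hφ]; fun_prop
  have hφ0 : ∀ x ∈ S, 0 ≤ φ x := by
    rintro x ⟨h1, -⟩
    have := h1.2
    simp only [hφ]
    have : 0 ≤ 1 - x.1 := by linarith
    positivity
  obtain ⟨C, hC0, hC⟩ : ∃ C : ℝ, 0 ≤ C ∧ ∀ x ∈ S, ‖G x.1 x.2 - g‖ ≤ ε / 2 + C * φ x := by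
    set T : Set (ℝ × ℂ) := S ∩ {x | ε / 2 ≤ ‖G x.1 x.2 - g‖} with hT
    have hTc : IsCompact T := by
      have : IsClosed T := by
        have := hH.preimage_isClosed_of_isClosed hSc.isClosed (isClosed_Ici (a := ε / 2))
        exact this
      exact hSc.of_isClosed_subset this Set.inter_subset_left
    rcases T.eq_empty_or_nonempty with hE | hne
    · refine ⟨0, le_rfl, fun x hx => ?_⟩
      have : x ∉ T := by rw [hE]; simp
      have : ¬ (ε / 2 ≤ ‖G x.1 x.2 - g‖) := fun h => this ⟨hx, h⟩
      linarith
    · obtain ⟨x0, hx0, hmin⟩ := hTc.exists_isMinOn hne hφc.continuousOn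
      have hpos : 0 < φ x0 := by
        rcases (hφ0 x0 hx0.1).lt_or_eq with h | h
        · exact h
        · exfalso
          have hz := hx0.1.2
          have ha : x0.1 ≤ 1 := hx0.1.1.2
          simp only [hφ] at h
          have h2 : x0.1 = 1 := by nlinarith [sq_nonneg ‖1 + x0.2 ^ 2‖]
          have h3 : ‖1 + x0.2 ^ 2‖ ^ 2 = 0 := by rw [h2] at h; linarith
          have h4 : 1 + x0.2 ^ 2 = 0 := by simpa using h3
          have h5 : (x0.2 - Complex.I) * (x0.2 + Complex.I) = 0 := by
            linear_combination h4 - Complex.I_sq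
          have h6 : G x0.1 x0.2 = g := by
            rw [h2]
            rcases mul_eq_zero.1 h5 with h | h
            · rw [sub_eq_zero.1 h, hi]
            · rw [eq_neg_of_add_eq_zero_left h, hi']
          have h7 : ε / 2 ≤ ‖G x0.1 x0.2 - g‖ := hx0.2
          rw [h6] at h7
          simp at h7
          linarith
      have hM0 : 0 ≤ M := (norm_nonneg _).trans (hM' x0 hx0.1)
      refine ⟨M / φ x0, by positivity, fun x hx => ?_⟩
      by_cases hxT : x ∈ T
      · have a1 : φ x0 ≤ φ x := hmin hxT
        have : M ≤ M / φ x0 * φ x := by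
          rw [div_mul_eq_mul_div, le_div_iff₀ hpos]; gcongr
        linarith [hM' x hx]
      · have : ¬ (ε / 2 ≤ ‖G x.1 x.2 - g‖) := fun h => hxT ⟨hx, h⟩
        have := mul_nonneg (div_nonneg hM0 hpos.le) (hφ0 x hx)
        linarith
  have hlim : Tendsto (fun a : ℝ => ε / 2 + C * (4 * (1 - a ^ 4) + (1 - a))) (𝓝[<] 1) (𝓝 (ε / 2)) := by
    have : Continuous (fun a : ℝ => ε / 2 + C * (4 * (1 - a ^ 4) + (1 - a))) := by fun_prop
    have := (this.tendsto 1).mono_left (nhdsWithin_le_nhds (s := Set.Iio 1))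
    simpa using this
  have hev := hlim.eventually_lt_const (show ε / 2 < ε by linarith)
  filter_upwards [hev, self_mem_nhdsWithin, mem_nhdsWithin_of_mem_nhds (Ioi_mem_nhds h1)] with a ha ha1 ha0
  have ha1' : a < 1 := ha1
  have haa : 0 ≤ a := h0.trans (le_of_lt ha0)
  have hmem : ∀ z : ℂ, ‖z‖ = 1 → (a, z) ∈ S := fun z hz => ⟨⟨le_of_lt ha0, ha1'.le⟩, by simpa using hz⟩
  have hGc : ContinuousOn (G a) (Metric.sphere (0:ℂ) 1) := by
    have : ContinuousOn (fun z : ℂ => (a, z)) (Metric.sphere (0:ℂ) 1) := by fun_prop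
    exact hG.comp this fun z hz => hmem z (by simpa using hz)
  have hKc : ContinuousOn (fun z => (KR a z : ℂ)) (Metric.sphere (0:ℂ) 1) := by
    intro z hz
    exact (Complex.continuous_ofReal.continuousAt.comp
      (KR_cont haa ha1' (by simpa using hz))).continuousWithinAt
  have i1 : CircleIntegrable (fun z => (KR a z : ℂ) * G a z) 0 1 :=
    (hKc.mul hGc).circleIntegrable zero_le_one
  have i2 : CircleIntegrable (fun z => (KR a z : ℂ) * g) 0 1 :=
    (hKc.mul continuousOn_const).circleIntegrable zero_le_one
  have eg : circleAverage (fun z => (KR a z : ℂ) * g) 0 1 = g := by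
    have : (fun z => (KR a z : ℂ) * g) = fun z => g * (Complex.ofRealCLM ∘ KR a) z := by
      ext z; simp [mul_comm]
    rw [this, cav_const_mul, Complex.ofRealCLM.circleAverage_comp_comm (KR_int haa ha1'),
      KR_avg haa ha1']
    simp
  rw [dist_eq_norm]
  have eg2 : circleAverage (fun z => (KR a z : ℂ) * G a z) 0 1 - g =
      circleAverage (fun z => (KR a z : ℂ) * G a z) 0 1 -
        circleAverage (fun z => (KR a z : ℂ) * g) 0 1 := by rw [eg]
  rw [eg2, ← circleAverage_fun_sub i1 i2]
  refine lt_of_le_of_lt ?_ ha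
  have ig : CircleIntegrable (fun z => (ε / 2 + C * (1 - a)) • KR a z + C * (4 * (1 - a ^ 4))) 0 1 := by
    apply CircleIntegrable.add
    · exact (KR_int haa ha1').const_smul
    · exact circleIntegrable_const _ _ _
  refine (cav_norm_le ig ?_).trans (le_of_eq ?_)
  · intro z hz
    have b1 := hC (a, z) (hmem z hz)
    have b2 := KR_bound haa ha1' hz
    have b3 := KR_nonneg haa ha1' z
    rw [← mul_sub, norm_mul, Complex.norm_real, Real.norm_of_nonneg b3]
    simp only [hφ] at b1
    calc KR a z * ‖G a z - g‖ ≤ KR a z * (ε / 2 + C * (‖1 + z ^ 2‖ ^ 2 + (1 - a))) := by gcongr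
      _ = (ε / 2 + C * (1 - a)) * KR a z + C * (KR a z * ‖1 + z ^ 2‖ ^ 2) := by ring
      _ ≤ (ε / 2 + C * (1 - a)) * KR a z + C * (4 * (1 - a ^ 4)) := by gcongr
  · rw [circleAverage_fun_add (f₁ := fun z => (ε / 2 + C * (1 - a)) • KR a z)
      (KR_int haa ha1').const_smul (circleIntegrable_const _ _ _),
      circleAverage_fun_smul, KR_avg haa ha1', circleAverage_const]
    simp; ring


noncomputable def Psi (p q x : ℂ) : ℂ :=
  Phi p q (p * q / x) / (qpoch (p * x) p * Phi p q (q * x))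

lemma Psi_den {p q x : ℂ} (hp : ‖p‖ < 1) (hq : ‖q‖ < 1) (hx : ‖x‖ ≤ 1) :
    qpoch (p * x) p * Phi p q (q * x) ≠ 0 := by
  refine mul_ne_zero (qpoch_ne_zero' hp ?_) (Phi_ne_zero hp hq ?_)
  · rw [norm_mul]; nlinarith [norm_nonneg p, norm_nonneg x]
  · rw [norm_mul]; nlinarith [norm_nonneg q, norm_nonneg x]

lemma Psi_contAt {p q x : ℂ} (hp : ‖p‖ < 1) (hq : ‖q‖ < 1) (hx0 : x ≠ 0) (hx : ‖x‖ ≤ 1) :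
    ContinuousAt (Psi p q) x := by
  unfold Psi
  have a1 : ContinuousAt (fun x => Phi p q (p * q / x)) x :=
    ContinuousAt.comp (g := Phi p q) (Phi_differentiable hp hq).continuous.continuousAt
      (by fun_prop (disch := assumption))
  have a2 : ContinuousAt (fun x => qpoch (p * x) p) x :=
    ContinuousAt.comp (g := fun y => qpoch y p) (qpoch_differentiable hp).continuous.continuousAt
      (by fun_prop)
  have a3 : ContinuousAt (fun x => Phi p q (q * x)) x :=
    ContinuousAt.comp (g := Phi p q) (Phi_differentiable hp hq).continuous.continuousAt
      (by fun_prop)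
  exact a1.div (a2.mul a3) (Psi_den hp hq hx)

lemma egamma_Psi {p q x : ℂ} (hp : ‖p‖ < 1) (hq : ‖q‖ < 1) (hx : ‖x‖ ≤ 1) (hx1 : x ≠ 1) :
    egamma x p q = Psi p q x / (1 - x) := by
  have e : Phi p q x = (1 - x) * (qpoch (p * x) p * Phi p q (q * x)) := by
    rw [Phi_shift_q hp hq, qpoch_succ hp]; ring
  have h1 : (1 - x) ≠ 0 := sub_ne_zero.2 (Ne.symm hx1)
  have h2 := Psi_den hp hq hx
  rw [egamma_eq hp hq (by rw [e]; exact mul_ne_zero h1 h2), e, Psi]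
  field_simp

lemma Psi_one {p q : ℂ} (hp : ‖p‖ < 1) (hq : ‖q‖ < 1) (hp0 : p ≠ 0) (hq0 : q ≠ 0) :
    Psi p q 1 = (qpoch p p * qpoch q q)⁻¹ := by
  have h3 : Phi p q (p * q) ≠ 0 := Phi_ne_zero hp hq (norm_mul_lt hp hq)
  have h1 := qpoch_ne_zero' hp hp
  have h2 := qpoch_ne_zero' hq hq
  have := Phi_shift_p (z := q) hp hq
  rw [Psi, mul_one, mul_one, div_one, this]
  field_simp

lemma Psi_neg_one {p q : ℂ} (hp : ‖p‖ < 1) (hq : ‖q‖ < 1) (hp0 : p ≠ 0) (hq0 : q ≠ 0) :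
    Psi p q (-1) ^ 2 * (theta p (-1) * theta q (-1)) = 4 := by
  have e := egamma_Psi (x := -1) hp hq (by simp) (by norm_num)
  have c := egamma_circle (x := -1) hp hq hp0 hq0 (by simp)
  have i : (-1 : ℂ)⁻¹ = -1 := by norm_num
  rw [i] at c
  have t1 := theta_ne_zero_circle (x := -1) hp (by simp) (by norm_num)
  have t2 := theta_ne_zero_circle (x := -1) hq (by simp) (by norm_num)
  have hne : egamma (-1) p q * egamma (-1) p q ≠ 0 := by
    intro h
    rw [h, inv_zero] at c
    exact mul_ne_zero t1 t2 c.symm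
  rw [← c]
  have e2 : Psi p q (-1) = 2 * egamma (-1) p q := by rw [e]; ring
  have hg := left_ne_zero_of_mul hne
  rw [e2]
  field_simp
  norm_num

lemma egamma_contAt {p q x : ℂ} (hp : ‖p‖ < 1) (hq : ‖q‖ < 1) (hx0 : x ≠ 0) (hx : ‖x‖ < 1) :
    ContinuousAt (fun y => egamma y p q) x := (egamma_differentiableAt hp hq hx0 hx).continuousAt

lemma theta_contAt {p x : ℂ} (hp : ‖p‖ < 1) (hx0 : x ≠ 0) :
    ContinuousAt (theta p) x := (theta_differentiableAt hp hx0).continuousAt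

noncomputable def T6 (p q τ : ℂ) (a : ℝ) : ℂ := p * q / ((a : ℂ) ^ 2 * τ ^ 3)

noncomputable def GLm (p q τ : ℂ) (a : ℝ) (z : ℂ) : ℂ :=
  Psi p q (I * a * z) * Psi p q (I * a * z⁻¹) * Psi p q (-I * a * z) * Psi p q (-I * a * z⁻¹) *
    (gg p q τ z ^ 3 * gg p q (T6 p q τ a) z * (theta p (z ^ 2) * theta q ((z ^ 2)⁻¹)))

lemma GLm_cont {p q τ : ℂ} (hp : ‖p‖ < 1) (hq : ‖q‖ < 1) (hp0 : p ≠ 0) (hq0 : q ≠ 0) (hτ0 : τ ≠ 0)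
    (hτ : ‖τ‖ < 1) (hτ5 : ‖p * q‖ < ‖τ‖ ^ 5) :
    ContinuousOn (fun x : ℝ × ℂ => GLm p q τ x.1 x.2) (Set.Icc ‖τ‖ 1 ×ˢ Metric.sphere (0:ℂ) 1) := by
  rintro ⟨a, z⟩ ⟨⟨ha0, ha1⟩, hz⟩
  apply ContinuousAt.continuousWithinAt
  have hz1 : ‖z‖ = 1 := by simpa using hz
  have hz0 : z ≠ 0 := by rw [← norm_pos_iff, hz1]; norm_num
  simp only at ha0 ha1
  have hτp : 0 < ‖τ‖ := norm_pos_iff.2 hτ0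
  have hap : 0 < a := hτp.trans_le ha0
  have haC : (a : ℂ) ≠ 0 := by exact_mod_cast hap.ne'
  have hna : ‖(a : ℂ)‖ = a := by rw [Complex.norm_real, Real.norm_of_nonneg hap.le]
  have hT0 : T6 p q τ a ≠ 0 := by unfold T6; positivity
  have hT1 : ‖T6 p q τ a‖ < 1 := by
    unfold T6
    rw [norm_div, norm_mul (_ ^ 2), norm_pow, norm_pow, hna, div_lt_one (by positivity)]
    refine hτ5.trans_le ?_
    rw [show ‖τ‖ ^ 5 = ‖τ‖ ^ 2 * ‖τ‖ ^ 3 by ring]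
    gcongr
  have hTc : ContinuousAt (fun x : ℝ × ℂ => T6 p q τ x.1) (a, z) := by
    unfold T6
    have : (a : ℂ) ^ 2 * τ ^ 3 ≠ 0 := by positivity
    fun_prop (disch := assumption)
  have c1 : ContinuousAt (fun x : ℝ × ℂ => Psi p q (I * x.1 * x.2)) (a, z) :=
    ContinuousAt.comp (f := fun x : ℝ × ℂ => I * x.1 * x.2) (g := Psi p q)
      (Psi_contAt hp hq (by simp [haC, hz0]) (by simp [hz1, abs_of_pos hap, ha1])) (by fun_prop)
  have c2 : ContinuousAt (fun x : ℝ × ℂ => Psi p q (I * x.1 * x.2⁻¹)) (a, z) :=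
    ContinuousAt.comp (f := fun x : ℝ × ℂ => I * x.1 * x.2⁻¹) (g := Psi p q)
      (Psi_contAt hp hq (by simp [haC, hz0]) (by simp [hz1, abs_of_pos hap, ha1]))
      (by fun_prop (disch := assumption))
  have c3 : ContinuousAt (fun x : ℝ × ℂ => Psi p q (-I * x.1 * x.2)) (a, z) :=
    ContinuousAt.comp (f := fun x : ℝ × ℂ => -I * x.1 * x.2) (g := Psi p q)
      (Psi_contAt hp hq (by simp [haC, hz0]) (by simp [hz1, abs_of_pos hap, ha1])) (by fun_prop)
  have c4 : ContinuousAt (fun x : ℝ × ℂ => Psi p q (-I * x.1 * x.2⁻¹)) (a, z) :=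
    ContinuousAt.comp (f := fun x : ℝ × ℂ => -I * x.1 * x.2⁻¹) (g := Psi p q)
      (Psi_contAt hp hq (by simp [haC, hz0]) (by simp [hz1, abs_of_pos hap, ha1]))
      (by fun_prop (disch := assumption))
  have G : ∀ t : ℝ → ℂ, t a ≠ 0 → ‖t a‖ < 1 → ContinuousAt (fun x : ℝ × ℂ => t x.1) (a, z) →
      ContinuousAt (fun x : ℝ × ℂ => gg p q (t x.1) x.2) (a, z) := by
    intro t h0 h1 hc
    unfold gg
    refine ContinuousAt.mul ?_ ?_
    · exact ContinuousAt.comp (f := fun x : ℝ × ℂ => t x.1 * x.2) (g := fun y => egamma y p q)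
        (egamma_contAt hp hq (mul_ne_zero h0 hz0) (by simpa [hz1] using h1)) (hc.mul continuousAt_snd)
    · exact ContinuousAt.comp (f := fun x : ℝ × ℂ => t x.1 * x.2⁻¹) (g := fun y => egamma y p q)
        (egamma_contAt hp hq (mul_ne_zero h0 (inv_ne_zero hz0)) (by simpa [hz1] using h1))
        (hc.mul (continuousAt_snd.inv₀ hz0))
  have c5 := G (fun _ => τ) hτ0 hτ continuousAt_const
  have c6 := G (T6 p q τ) hT0 hT1 hTc
  have c7 : ContinuousAt (fun x : ℝ × ℂ => theta p (x.2 ^ 2)) (a, z) :=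
    ContinuousAt.comp (f := fun x : ℝ × ℂ => x.2 ^ 2) (g := theta p)
      (theta_contAt hp (by positivity)) (by fun_prop)
  have hzz : z ^ 2 ≠ 0 := by positivity
  have c8 : ContinuousAt (fun x : ℝ × ℂ => theta q ((x.2 ^ 2)⁻¹)) (a, z) :=
    ContinuousAt.comp (f := fun x : ℝ × ℂ => (x.2 ^ 2)⁻¹) (g := theta q)
      (theta_contAt hq (by positivity)) (by fun_prop (disch := assumption))
  exact (((c1.mul c2).mul c3).mul c4).mul (((c5.pow 3).mul c6).mul (c7.mul c8))

lemma GLm_I {p q τ z : ℂ} (hp : ‖p‖ < 1) (hq : ‖q‖ < 1) (hp0 : p ≠ 0) (hq0 : q ≠ 0)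
    (hz : z = I ∨ z = -I) :
    GLm p q τ 1 z = 4 * Psi p q 1 ^ 2 * (gg p q τ I ^ 3 * gg p q (T6 p q τ 1) I) := by
  have h := Psi_neg_one hp hq hp0 hq0
  have I1 : I⁻¹ = -I := Complex.inv_I
  have I2 : (-I)⁻¹ = I := by rw [inv_neg, I1, neg_neg]
  have gs : ∀ t, gg p q t (-I) = gg p q t I := by
    intro t; unfold gg; rw [I1, I2, mul_comm]
  have i : (-1 : ℂ)⁻¹ = -1 := by norm_num
  unfold GLm
  rcases hz with rfl | rfl
  · rw [I1, Complex.I_sq, i]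
    simp only [Complex.ofReal_one, mul_one, mul_neg, neg_mul, Complex.I_mul_I, neg_neg]
    linear_combination (Psi p q 1 ^ 2 * (gg p q τ I ^ 3 * gg p q (T6 p q τ 1) I)) * h
  · rw [I2, neg_sq, Complex.I_sq, i, gs, gs]
    simp only [Complex.ofReal_one, mul_one, mul_neg, neg_mul, Complex.I_mul_I, neg_neg]
    linear_combination (Psi p q 1 ^ 2 * (gg p q τ I ^ 3 * gg p q (T6 p q τ 1) I)) * h

lemma EE_KR {p q τ z : ℂ} {a : ℝ} (hp : ‖p‖ < 1) (hq : ‖q‖ < 1) (ha0 : 0 < a) (ha1 : a < 1)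
    (hz1 : ‖z‖ = 1) :
    (1 - (a : ℂ) ^ 4) * EE p q (I * a) (-I * a) τ τ τ (T6 p q τ a) z = (KR a z : ℂ) * GLm p q τ a z := by
  have hz0 : z ≠ 0 := by rw [← norm_pos_iff, hz1]; norm_num
  have E : ∀ x : ℂ, ‖x‖ = a → egamma x p q = Psi p q x / (1 - x) ∧ 1 - x ≠ 0 := by
    intro x hx
    have : x ≠ 1 := by rintro rfl; simp at hx; linarith
    exact ⟨egamma_Psi hp hq (by linarith) this, sub_ne_zero.2 (Ne.symm this)⟩
  obtain ⟨e1, d1⟩ := E (I * a * z) (by simp [hz1, abs_of_pos ha0])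
  obtain ⟨e2, d2⟩ := E (I * a * z⁻¹) (by simp [hz1, abs_of_pos ha0])
  obtain ⟨e3, d3⟩ := E (-I * a * z) (by simp [hz1, abs_of_pos ha0])
  obtain ⟨e4, d4⟩ := E (-I * a * z⁻¹) (by simp [hz1, abs_of_pos ha0])
  have hK : (KR a z : ℂ) = (1 - (a : ℂ) ^ 4) /
      ((1 - I * a * z) * (1 - I * a * z⁻¹) * (1 - -I * a * z) * (1 - -I * a * z⁻¹)) := by
    unfold KR
    rw [← Complex.normSq_eq_norm_sq]
    push_cast
    rw [Complex.normSq_eq_conj_mul_self]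
    have hc : (starRingEnd ℂ) z = z⁻¹ := (Complex.inv_eq_conj hz1).symm
    have : (starRingEnd ℂ) (1 + (a : ℂ) ^ 2 * z ^ 2) = 1 + (a : ℂ) ^ 2 * (z⁻¹) ^ 2 := by
      simp [hc]
    rw [this]
    have hden : (1 + (a : ℂ) ^ 2 * z⁻¹ ^ 2) * (1 + (a : ℂ) ^ 2 * z ^ 2) =
      (1 - I * a * z) * (1 - I * a * z⁻¹) * (1 - -I * a * z) * (1 - -I * a * z⁻¹) := by
      linear_combination ((a : ℂ) ^ 2 * z⁻¹ ^ 2 * (1 + (a : ℂ) ^ 2 * z ^ 2) + (a : ℂ) ^ 2 * z ^ 2 *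
         (1 - I ^ 2 * (a : ℂ) ^ 2 * z⁻¹ ^ 2)) * Complex.I_sq
    rw [hden]
  have hg1 : gg p q (I * a) z = Psi p q (I * a * z) / (1 - I * a * z) *
      (Psi p q (I * a * z⁻¹) / (1 - I * a * z⁻¹)) := by rw [gg, e1, e2]
  have hg2 : gg p q (-I * a) z = Psi p q (-I * a * z) / (1 - -I * a * z) *
      (Psi p q (-I * a * z⁻¹) / (1 - -I * a * z⁻¹)) := by rw [gg, e3, e4]
  unfold EE GLm
  rw [hK, hg1, hg2]
  clear hK hg1 hg2 e1 e2 e3 e4 E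
  generalize Psi p q (I * a * z) = A1
  generalize Psi p q (I * a * z⁻¹) = A2
  generalize Psi p q (-I * a * z) = A3
  generalize Psi p q (-I * a * z⁻¹) = A4
  generalize gg p q τ z = A5
  generalize gg p q (T6 p q τ a) z = A6
  generalize theta p (z ^ 2) * theta q ((z ^ 2)⁻¹) = A7
  generalize 1 - I * a * z = D1 at *
  generalize 1 - I * a * z⁻¹ = D2 at *
  generalize 1 - -I * a * z = D3 at *
  generalize 1 - -I * a * z⁻¹ = D4 at *
  field_simp


noncomputable def NL (p q τ : ℂ) (a : ℝ) : ℂ :=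
  (1 + (a : ℂ) ^ 2) * Psi p q ((a : ℂ) ^ 2) *
    ((egamma (I * a * τ) p q * egamma (-I * a * τ) p q) ^ 3 *
      (egamma (I * a * T6 p q τ a) p q * egamma (-I * a * T6 p q τ a) p q) *
      (egamma (τ * τ) p q * egamma (τ * T6 p q τ a) p q) ^ 3)

lemma NN_NL {p q τ : ℂ} {a : ℝ} (hp : ‖p‖ < 1) (hq : ‖q‖ < 1) (ha0 : 0 < a) (ha1 : a < 1) :
    (1 - (a : ℂ) ^ 4) * NN p q (I * a) (-I * a) τ τ τ (T6 p q τ a) = NL p q τ a := by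
  have ha2 : a ^ 2 < 1 := by nlinarith
  have hn : ‖(a : ℂ) ^ 2‖ = a ^ 2 := by
    rw [norm_pow, Complex.norm_real, Real.norm_of_nonneg ha0.le]
  have hne : (a : ℂ) ^ 2 ≠ 1 := by
    intro h; rw [h] at hn; simp at hn; linarith
  have e1 : I * a * (-I * a) = (a : ℂ) ^ 2 := by linear_combination (-(a : ℂ) ^ 2) * Complex.I_sq
  have e2 := egamma_Psi (x := (a : ℂ) ^ 2) hp hq (by rw [hn]; exact ha2.le) hne
  have d : 1 - (a : ℂ) ^ 2 ≠ 0 := sub_ne_zero.2 (Ne.symm hne)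
  have e3 : (1 - (a : ℂ) ^ 4) * egamma ((a : ℂ) ^ 2) p q = (1 + (a : ℂ) ^ 2) * Psi p q ((a : ℂ) ^ 2) := by
    rw [e2]; field_simp; ring
  unfold NN NL
  rw [e1, ← e3]
  generalize egamma ((a : ℂ) ^ 2) p q = A0
  generalize egamma (I * a * τ) p q = A1
  generalize egamma (-I * a * τ) p q = A2
  generalize egamma (I * a * T6 p q τ a) p q = A3
  generalize egamma (-I * a * T6 p q τ a) p q = A4
  generalize egamma (τ * τ) p q = A5
  generalize egamma (τ * T6 p q τ a) p q = A6
  ring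

lemma NL_lim {p q τ : ℂ} (hp : ‖p‖ < 1) (hq : ‖q‖ < 1) (hp0 : p ≠ 0) (hq0 : q ≠ 0) (hτ0 : τ ≠ 0)
    (hτ : ‖τ‖ < 1) (hτ5 : ‖p * q‖ < ‖τ‖ ^ 5) :
    Tendsto (NL p q τ) (𝓝[<] 1)
      (𝓝 (2 * Psi p q 1 * (gg p q τ I ^ 3 * gg p q (T6 p q τ 1) I))) := by
  have hτp : 0 < ‖τ‖ := norm_pos_iff.2 hτ0
  have h3 : ‖τ‖ ^ 5 ≤ ‖τ‖ ^ 3 := pow_le_pow_of_le_one hτp.le hτ.le (by norm_num)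
  have h2 : ‖τ‖ ^ 5 ≤ ‖τ‖ ^ 2 := pow_le_pow_of_le_one hτp.le hτ.le (by norm_num)
  have hT0 : T6 p q τ 1 ≠ 0 := by unfold T6; simp; tauto
  have hT1 : ‖T6 p q τ 1‖ < 1 := by
    unfold T6
    simp only [Complex.ofReal_one, one_pow, one_mul]
    rw [norm_div, norm_pow, div_lt_one (by positivity)]
    linarith
  have hTc : ContinuousAt (fun a : ℝ => T6 p q τ a) 1 := by
    unfold T6
    have : ((1 : ℝ) : ℂ) ^ 2 * τ ^ 3 ≠ 0 := by simp [hτ0]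
    fun_prop (disch := assumption)
  have hac : ContinuousAt (fun a : ℝ => (a : ℂ)) 1 := Complex.continuous_ofReal.continuousAt
  have hc : ContinuousAt (NL p q τ) 1 := by
    unfold NL
    have E : ∀ f : ℝ → ℂ, ContinuousAt f 1 → f 1 ≠ 0 → ‖f 1‖ < 1 →
        ContinuousAt (fun a => egamma (f a) p q) 1 := fun f hf h0 h1 =>
      ContinuousAt.comp (f := f) (g := fun y => egamma y p q) (egamma_contAt hp hq h0 h1) hf
    have c0 : ContinuousAt (fun a : ℝ => Psi p q ((a : ℂ) ^ 2)) 1 :=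
      ContinuousAt.comp (f := fun a : ℝ => (a : ℂ) ^ 2) (g := Psi p q)
        (Psi_contAt hp hq (by simp) (by simp)) (hac.pow 2)
    have c1 := E (fun a => I * a * τ) (by fun_prop) (by simp [hτ0]) (by simpa using hτ)
    have c2 := E (fun a => -I * a * τ) (by fun_prop) (by simp [hτ0]) (by simpa using hτ)
    have c3 := E (fun a => I * a * T6 p q τ a) ((continuousAt_const.mul hac).mul hTc) (by simp [hT0])
      (by simpa using hT1)
    have c4 := E (fun a => -I * a * T6 p q τ a) ((continuousAt_const.mul hac).mul hTc) (by simp [hT0])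
      (by simpa using hT1)
    have c6 := E (fun a => τ * T6 p q τ a) (continuousAt_const.mul hTc) (mul_ne_zero hτ0 hT0)
      (norm_mul_lt hτ hT1)
    exact ((continuousAt_const.add (hac.pow 2)).mul c0).mul
      ((((c1.mul c2).pow 3).mul (c3.mul c4)).mul ((continuousAt_const.mul c6).pow 3))
  have hv : NL p q τ 1 = 2 * Psi p q 1 * (gg p q τ I ^ 3 * gg p q (T6 p q τ 1) I) := by
    have r : egamma (τ * τ) p q * egamma (τ * T6 p q τ 1) p q = 1 := by
      have : τ * T6 p q τ 1 = p * q / (τ * τ) := by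
        unfold T6; simp; field_simp
      rw [this]
      refine egamma_refl hp hq hp0 hq0 ?_ (norm_mul_lt hτ hτ)
      rw [norm_mul τ]; nlinarith
    have g : ∀ t : ℂ, gg p q t I = egamma (I * t) p q * egamma (-I * t) p q := by
      intro t; unfold gg; rw [Complex.inv_I, mul_comm t I, mul_comm t (-I)]
    unfold NL
    rw [r, g, g]
    simp only [Complex.ofReal_one, mul_one, one_pow]
    ring
  rw [← hv]
  exact hc.tendsto.mono_left nhdsWithin_le_nhds

theorem elliptic_beta {p q : ℂ} (hp : ‖p‖ < 1) (hp0 : p ≠ 0) (hq : ‖q‖ < 1) (hq0 : q ≠ 0)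
    {t1 t2 t3 t4 t5 t6 : ℂ} (h1 : t1 ≠ 0) (h2 : t2 ≠ 0) (h3 : t3 ≠ 0) (h4 : t4 ≠ 0) (h5 : t5 ≠ 0)
    (h6 : t6 ≠ 0) (n1 : ‖t1‖ < 1) (n2 : ‖t2‖ < 1) (n3 : ‖t3‖ < 1) (n4 : ‖t4‖ < 1) (n5 : ‖t5‖ < 1)
    (n6 : ‖t6‖ < 1) (hprod : t1 * t2 * t3 * t4 * t5 * t6 = p * q) :
    qpoch p p * qpoch q q * II p q t1 t2 t3 t4 t5 t6 = 2 * NN p q t1 t2 t3 t4 t5 t6 := by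
  obtain ⟨c, hc⟩ := JJ_const hp hp0 hq hq0
  have hII : ∀ t1 t2 t3 t4 t5 t6 : ℂ, t1 ≠ 0 → t2 ≠ 0 → t3 ≠ 0 → t4 ≠ 0 → t5 ≠ 0 → t6 ≠ 0 →
      ‖t1‖ < 1 → ‖t2‖ < 1 → ‖t3‖ < 1 → ‖t4‖ < 1 → ‖t5‖ < 1 → ‖t6‖ < 1 →
      t1 * t2 * t3 * t4 * t5 * t6 = p * q →
      II p q t1 t2 t3 t4 t5 t6 = c * NN p q t1 t2 t3 t4 t5 t6 := by
    intro t1 t2 t3 t4 t5 t6 h1 h2 h3 h4 h5 h6 n1 n2 n3 n4 n5 n6 hprod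
    have e := hc t1 t2 t3 t4 t5 t6 h1 h2 h3 h4 h5 h6 n1 n2 n3 n4 n5 n6 hprod
    have hn := NN_ne_zero hp hp0 hq hq0 h1 h2 h3 h4 h5 h6 n1 n2 n3 n4 n5 n6 hprod
    unfold JJ at e
    exact (div_eq_iff hn).1 e
  suffices hcv : c = 2 * (qpoch p p * qpoch q q)⁻¹ by
    rw [hII t1 t2 t3 t4 t5 t6 h1 h2 h3 h4 h5 h6 n1 n2 n3 n4 n5 n6 hprod, hcv]
    have := qpoch_ne_zero' hp hp
    have := qpoch_ne_zero' hq hq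
    field_simp
  -- choice of τ
  have hpq : ‖p * q‖ < 1 := norm_mul_lt hp hq
  have hpq0 : 0 < ‖p * q‖ := norm_pos_iff.2 (mul_ne_zero hp0 hq0)
  obtain ⟨σ, hσ1, hσ2⟩ := exists_between (Real.rpow_lt_one hpq0.le hpq (show (0:ℝ) < 1 / 5 by norm_num))
  have hσ0 : 0 < σ := lt_trans (Real.rpow_pos_of_pos hpq0 _) hσ1
  have hσ5 : ‖p * q‖ < σ ^ 5 := by
    have : (‖p * q‖ ^ ((1:ℝ) / 5)) ^ 5 = ‖p * q‖ := by
      rw [← Real.rpow_natCast, ← Real.rpow_mul hpq0.le]; norm_num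
    rw [← this]
    gcongr
  set τ : ℂ := (σ : ℂ) with hτd
  have hnτ : ‖τ‖ = σ := by rw [hτd, Complex.norm_real, Real.norm_of_nonneg hσ0.le]
  have hτ0 : τ ≠ 0 := by rw [← norm_pos_iff, hnτ]; exact hσ0
  have hτ : ‖τ‖ < 1 := by rw [hnτ]; exact hσ2
  have hτ5 : ‖p * q‖ < ‖τ‖ ^ 5 := by rw [hnτ]; exact hσ5
  have L1 := poisson_lim (G := GLm p q τ) (norm_nonneg τ) hτ (GLm_cont hp hq hp0 hq0 hτ0 hτ hτ5)
    (GLm_I hp hq hp0 hq0 (Or.inl rfl)) (GLm_I hp hq hp0 hq0 (Or.inr rfl))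
  have L2 := (NL_lim hp hq hp0 hq0 hτ0 hτ hτ5).const_mul c
  have hev : ∀ᶠ a : ℝ in 𝓝[<] 1, c * NL p q τ a =
      circleAverage (fun z => (KR a z : ℂ) * GLm p q τ a z) 0 1 := by
    filter_upwards [self_mem_nhdsWithin, mem_nhdsWithin_of_mem_nhds (Ioi_mem_nhds hτ)] with a ha1 ha0
    have ha1' : a < 1 := ha1
    have ha0' : ‖τ‖ < a := ha0
    have hap : 0 < a := (norm_nonneg τ).trans_lt ha0'
    have haC : (a : ℂ) ≠ 0 := by exact_mod_cast hap.ne'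
    have hna : ‖(a : ℂ)‖ = a := by rw [Complex.norm_real, Real.norm_of_nonneg hap.le]
    have hT0 : T6 p q τ a ≠ 0 := by unfold T6; positivity
    have hT1 : ‖T6 p q τ a‖ < 1 := by
      unfold T6
      rw [norm_div, norm_mul (_ ^ 2), norm_pow, norm_pow, hna, div_lt_one (by positivity)]
      refine hτ5.trans_le ?_
      rw [show ‖τ‖ ^ 5 = ‖τ‖ ^ 2 * ‖τ‖ ^ 3 by ring]
      gcongr
    have e := hII (I * a) (-I * a) τ τ τ (T6 p q τ a) (by simp [haC]) (by simp [haC]) hτ0 hτ0 hτ0 hT0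
      (by simpa [abs_of_pos hap] using ha1') (by simpa [abs_of_pos hap] using ha1') hτ hτ hτ hT1 (by
        have hdiv : ((a : ℂ) ^ 2 * τ ^ 3) * T6 p q τ a = p * q := by
          unfold T6
          exact mul_div_cancel₀ _ (by positivity)
        linear_combination (-I ^ 2) * hdiv - p * q * Complex.I_sq)
    rw [← NN_NL hp hq hap ha1', show c * ((1 - (a : ℂ) ^ 4) * NN p q (I * a) (-I * a) τ τ τ (T6 p q τ a))
      = (1 - (a : ℂ) ^ 4) * (c * NN p q (I * a) (-I * a) τ τ τ (T6 p q τ a)) by ring, ← e]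
    unfold II
    rw [← cav_const_mul]
    apply cav_congr
    intro z hz
    exact EE_KR hp hq hap ha1' hz
  have hlim := tendsto_nhds_unique (L2.congr' hev) L1
  have hX : gg p q τ I ^ 3 * gg p q (T6 p q τ 1) I ≠ 0 := by
    have hσle : σ ^ 5 ≤ σ ^ 1 := pow_le_pow_of_le_one hσ0.le hσ2.le (by norm_num)
    have hσ3 : σ ^ 5 ≤ σ ^ 3 := pow_le_pow_of_le_one hσ0.le hσ2.le (by norm_num)
    have hσ31 : σ ^ 3 < 1 := pow_lt_one₀ hσ0.le hσ2 (by norm_num)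
    have hT : ‖T6 p q τ 1‖ = ‖p * q‖ / σ ^ 3 := by
      unfold T6
      simp only [Complex.ofReal_one, one_pow, one_mul]
      rw [norm_div, norm_pow, hnτ]
    have A : ∀ t : ℂ, ‖p * q‖ < ‖t‖ → ‖t‖ < 1 → gg p q t I ≠ 0 := by
      intro t h0 h1
      have e1 : ‖t * I‖ = ‖t‖ := by simp
      have e2 : ‖t * I⁻¹‖ = ‖t‖ := by simp
      unfold gg
      exact mul_ne_zero (egamma_ne_zero hp hp0 hq hq0 (by rwa [e1]) (by rwa [e1]))
        (egamma_ne_zero hp hp0 hq hq0 (by rwa [e2]) (by rwa [e2]))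
    refine mul_ne_zero (pow_ne_zero _ (A _ ?_ hτ)) (A _ ?_ ?_)
    · rw [hnτ]; linarith
    · rw [hT, lt_div_iff₀ (by positivity)]; nlinarith
    · rw [hT, div_lt_one (by positivity)]; linarith
  have hP1 := Psi_one hp hq hp0 hq0
  have hP : Psi p q 1 ≠ 0 := by
    rw [hP1]
    exact inv_ne_zero (mul_ne_zero (qpoch_ne_zero' hp hp) (qpoch_ne_zero' hq hq))
  rw [← hP1]
  generalize gg p q τ I ^ 3 * gg p q (T6 p q τ 1) I = X at *
  have : (2 * Psi p q 1 * X) * (c - 2 * Psi p q 1) = 0 := by linear_combination hlim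
  have h0 : 2 * Psi p q 1 * X ≠ 0 := by simp [hP, hX]
  exact sub_eq_zero.1 ((mul_eq_zero.1 this).resolve_left h0)


lemma gamma4_gg (p q a u v : ℂ) : gamma4 p q a u v = gg p q (a * u) v * gg p q (a * u⁻¹) v := by
  unfold gamma4 gg; ring

lemma gamma4_gg' (p q a u v : ℂ) : gamma4 p q a u v = gg p q (a * v) u * gg p q (a * v⁻¹) u := by
  unfold gamma4 gg
  rw [show a * u * v = a * v * u by ring, show a * u * v⁻¹ = a * v⁻¹ * u by ring,
    show a * u⁻¹ * v = a * v * u⁻¹ by ring, show a * u⁻¹ * v⁻¹ = a * v⁻¹ * u⁻¹ by ring]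
  ring

lemma Dfun_gg (p q r s y w : ℂ) :
    Dfun p q r s y w = gg p q (r * s⁻¹ * y) w * gg p q (r * s⁻¹ * y⁻¹) w := by
  unfold Dfun gg; ring

noncomputable def WW (p q z : ℂ) : ℂ := theta p (z ^ 2) * theta q ((z ^ 2)⁻¹)

lemma kernel_eq {p q z A B : ℂ} (hp : ‖p‖ < 1) (hq : ‖q‖ < 1) (hp0 : p ≠ 0) (hq0 : q ≠ 0)
    (hz : ‖z‖ = 1) :
    A / (B * egamma (z ^ 2) p q * egamma ((z ^ 2)⁻¹) p q) = A * B⁻¹ * WW p q z := by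
  have := egamma_circle (x := z ^ 2) hp hq hp0 hq0 (by simp [hz])
  unfold WW
  rw [← this, div_eq_mul_inv, mul_assoc B, mul_inv, mul_assoc]

lemma NN_bailey {p q r s t y w z : ℂ} (hp : ‖p‖ < 1) (hq : ‖q‖ < 1) (hp0 : p ≠ 0) (hq0 : q ≠ 0)
    (hr : r ^ 2 = p * q) (hs : s ≠ 0) (ht : t ≠ 0) (hy : y ≠ 0) (hw : w ≠ 0) (hz : z ≠ 0)
    (h1 : ‖t‖ < 1) (h2 : ‖s‖ < 1)
    (h3 : ‖r * (s * t)⁻¹ * y‖ < 1) (h4 : ‖r * (s * t)⁻¹ * y⁻¹‖ < 1)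
    (h5 : ‖s * w‖ < 1) (h6 : ‖s * w⁻¹‖ < 1) :
    Dfun p q r t⁻¹ y w * (egamma (s ^ 2) p q)⁻¹ * (egamma (t ^ 2) p q)⁻¹ *
      NN p q (s * w) (s * w⁻¹) (r * (s * t)⁻¹ * y) (r * (s * t)⁻¹ * y⁻¹) (t * z) (t * z⁻¹) =
    gamma4 p q (s * t) w z * (egamma (s ^ 2 * t ^ 2) p q)⁻¹ * Dfun p q r s y z := by
  have hr0 : r ≠ 0 := by
    rintro rfl
    have : p * q = 0 := by rw [← hr]; ring
    exact mul_ne_zero hp0 hq0 this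
  have ht2 : ‖t ^ 2‖ < 1 := by rw [sq]; exact norm_mul_lt h1 h1
  have hs2 : ‖s ^ 2‖ < 1 := by rw [sq]; exact norm_mul_lt h2 h2
  -- pair products
  have e12 : s * w * (s * w⁻¹) = s ^ 2 := by field_simp
  have e13 : s * w * (r * (s * t)⁻¹ * y) = r * t⁻¹ * y * w := by field_simp
  have e14 : s * w * (r * (s * t)⁻¹ * y⁻¹) = r * t⁻¹ * y⁻¹ * w := by field_simp
  have e15 : s * w * (t * z) = s * t * w * z := by ring
  have e16 : s * w * (t * z⁻¹) = s * t * w * z⁻¹ := by ring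
  have e23 : s * w⁻¹ * (r * (s * t)⁻¹ * y) = r * t⁻¹ * y * w⁻¹ := by field_simp
  have e24 : s * w⁻¹ * (r * (s * t)⁻¹ * y⁻¹) = r * t⁻¹ * y⁻¹ * w⁻¹ := by field_simp
  have e25 : s * w⁻¹ * (t * z) = s * t * w⁻¹ * z := by ring
  have e26 : s * w⁻¹ * (t * z⁻¹) = s * t * w⁻¹ * z⁻¹ := by ring
  have e34 : r * (s * t)⁻¹ * y * (r * (s * t)⁻¹ * y⁻¹) = p * q / (s ^ 2 * t ^ 2) := by
    rw [← hr]; field_simp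
  have e35 : r * (s * t)⁻¹ * y * (t * z) = r * s⁻¹ * y * z := by field_simp
  have e36 : r * (s * t)⁻¹ * y * (t * z⁻¹) = r * s⁻¹ * y * z⁻¹ := by field_simp
  have e45 : r * (s * t)⁻¹ * y⁻¹ * (t * z) = r * s⁻¹ * y⁻¹ * z := by field_simp
  have e46 : r * (s * t)⁻¹ * y⁻¹ * (t * z⁻¹) = r * s⁻¹ * y⁻¹ * z⁻¹ := by field_simp
  have e56 : t * z * (t * z⁻¹) = t ^ 2 := by field_simp
  have n13 := norm_mul_lt h5 h3
  have n14 := norm_mul_lt h5 h4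
  have n23 := norm_mul_lt h6 h3
  have n24 := norm_mul_lt h6 h4
  have n34 := norm_mul_lt h3 h4
  rw [e13] at n13
  rw [e14] at n14
  rw [e23] at n23
  rw [e24] at n24
  rw [e34] at n34
  -- reflections
  have R : ∀ A B : ℂ, A ≠ 0 → B ≠ 0 → ‖A‖ < 1 → ‖B‖ < 1 → p * q = A * B →
      egamma A p q * egamma B p q = 1 := by
    intro A B hA hB nA nB h
    have : B = p * q / A := by rw [h]; field_simp
    rw [this]
    refine egamma_refl hp hq hp0 hq0 (norm_pair_lt (y := B) hA (by rw [h]; ring) nB) nA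
  have U : ∀ Y V : ℂ, ‖r * t⁻¹ * Y * V‖ < 1 → ‖r * t * Y * V‖ < 1 := by
    intro Y V h
    have : r * t * Y * V = t ^ 2 * (r * t⁻¹ * Y * V) := by field_simp
    rw [this]
    exact norm_mul_lt ht2 h
  have r1 := R (r * t⁻¹ * y * w) (r * t * y⁻¹ * w⁻¹) (by positivity) (by positivity) n13
    (U _ _ n24) (by rw [← hr]; field_simp)
  have r2 := R (r * t⁻¹ * y⁻¹ * w) (r * t * y * w⁻¹) (by positivity) (by positivity) n14
    (U _ _ n23) (by rw [← hr]; field_simp)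
  have r3 := R (r * t⁻¹ * y * w⁻¹) (r * t * y⁻¹ * w) (by positivity) (by positivity) n23
    (U _ _ n14) (by rw [← hr]; field_simp)
  have r4 := R (r * t⁻¹ * y⁻¹ * w⁻¹) (r * t * y * w) (by positivity) (by positivity) n24
    (U _ _ n13) (by rw [← hr]; field_simp)
  have r5 := R (p * q / (s ^ 2 * t ^ 2)) (s ^ 2 * t ^ 2) (by positivity) (by positivity) n34
    (norm_mul_lt hs2 ht2) (by field_simp)
  have g5 : egamma (s ^ 2 * t ^ 2) p q ≠ 0 := right_ne_zero_of_mul (by rw [r5]; exact one_ne_zero)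
  have hst : p * q = (p * q / (s ^ 2 * t ^ 2)) * t ^ 2 * s ^ 2 := by field_simp
  have hst' : p * q = (p * q / (s ^ 2 * t ^ 2)) * s ^ 2 * t ^ 2 := by field_simp
  have gs : egamma (s ^ 2) p q ≠ 0 := egamma_ne_zero hp hp0 hq hq0
    (norm_pair_lt (by positivity) hst (norm_mul_lt n34 ht2)) hs2
  have gt : egamma (t ^ 2) p q ≠ 0 := egamma_ne_zero hp hp0 hq hq0
    (norm_pair_lt (by positivity) hst' (norm_mul_lt n34 hs2)) ht2
  unfold NN Dfun gamma4
  rw [e12, e13, e14, e15, e16, e23, e24, e25, e26, e34, e35, e36, e45, e46, e56, inv_inv]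
  have r5' : egamma (p * q / (s ^ 2 * t ^ 2)) p q = (egamma (s ^ 2 * t ^ 2) p q)⁻¹ :=
    eq_inv_of_mul_eq_one_left r5
  have r1' := eq_inv_of_mul_eq_one_right r1
  have r2' := eq_inv_of_mul_eq_one_right r2
  have r3' := eq_inv_of_mul_eq_one_right r3
  have r4' := eq_inv_of_mul_eq_one_right r4
  have g1 : egamma (r * t⁻¹ * y * w) p q ≠ 0 := left_ne_zero_of_mul (by rw [r1]; exact one_ne_zero)
  have g2 : egamma (r * t⁻¹ * y⁻¹ * w) p q ≠ 0 := left_ne_zero_of_mul (by rw [r2]; exact one_ne_zero)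
  have g3 : egamma (r * t⁻¹ * y * w⁻¹) p q ≠ 0 := left_ne_zero_of_mul (by rw [r3]; exact one_ne_zero)
  have g4 : egamma (r * t⁻¹ * y⁻¹ * w⁻¹) p q ≠ 0 := left_ne_zero_of_mul (by rw [r4]; exact one_ne_zero)
  rw [r5', r1', r2', r3', r4']
  clear r1 r2 r3 r4 r5 r1' r2' r3' r4' r5' R U
  generalize egamma (r * t⁻¹ * y * w) p q = A1 at *
  generalize egamma (r * t⁻¹ * y⁻¹ * w) p q = A2 at *
  generalize egamma (r * t⁻¹ * y * w⁻¹) p q = A3 at *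
  generalize egamma (r * t⁻¹ * y⁻¹ * w⁻¹) p q = A4 at *
  generalize egamma (s ^ 2 * t ^ 2) p q = A5 at *
  generalize egamma (s ^ 2) p q = A6 at *
  generalize egamma (t ^ 2) p q = A7 at *
  generalize egamma (s * t * w * z) p q = B1
  generalize egamma (s * t * w * z⁻¹) p q = B2
  generalize egamma (s * t * w⁻¹ * z) p q = B3
  generalize egamma (s * t * w⁻¹ * z⁻¹) p q = B4
  generalize egamma (r * s⁻¹ * y * z) p q = C1
  generalize egamma (r * s⁻¹ * y * z⁻¹) p q = C2
  generalize egamma (r * s⁻¹ * y⁻¹ * z) p q = C3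
  generalize egamma (r * s⁻¹ * y⁻¹ * z⁻¹) p q = C4
  field_simp

lemma gg_cont_comp {X : Type*} [TopologicalSpace X] {p q : ℂ} (hp : ‖p‖ < 1) (hq : ‖q‖ < 1)
    {f g : X → ℂ} (hf : Continuous f) (hg : Continuous g) (f0 : ∀ x, f x ≠ 0) (f1 : ∀ x, ‖f x‖ < 1)
    (g1 : ∀ x, ‖g x‖ = 1) : Continuous fun x => gg p q (f x) (g x) := by
  have g0 : ∀ x, g x ≠ 0 := fun x => by rw [← norm_pos_iff, g1]; norm_num
  rw [continuous_iff_continuousAt]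
  intro x
  unfold gg
  refine ContinuousAt.mul ?_ ?_
  · exact ContinuousAt.comp (f := fun x => f x * g x) (g := fun y => egamma y p q)
      (egamma_contAt hp hq (mul_ne_zero (f0 x) (g0 x)) (by simpa [g1] using f1 x))
      (hf.mul hg).continuousAt
  · exact ContinuousAt.comp (f := fun x => f x * (g x)⁻¹) (g := fun y => egamma y p q)
      (egamma_contAt hp hq (mul_ne_zero (f0 x) (inv_ne_zero (g0 x))) (by simpa [g1] using f1 x))
      (hf.mul (hg.inv₀ g0)).continuousAt

lemma WW_cont_comp {X : Type*} [TopologicalSpace X] {p q : ℂ} (hp : ‖p‖ < 1) (hq : ‖q‖ < 1)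
    {g : X → ℂ} (hg : Continuous g) (g1 : ∀ x, ‖g x‖ = 1) : Continuous fun x => WW p q (g x) := by
  have g0 : ∀ x, g x ^ 2 ≠ 0 := fun x => pow_ne_zero _ (by rw [← norm_pos_iff, g1]; norm_num)
  rw [continuous_iff_continuousAt]
  intro x
  unfold WW
  refine ContinuousAt.mul ?_ ?_
  · exact ContinuousAt.comp (f := fun x => g x ^ 2) (g := theta p)
      (theta_contAt hp (g0 x)) (hg.pow 2).continuousAt
  · exact ContinuousAt.comp (f := fun x => (g x ^ 2)⁻¹) (g := theta q)
      (theta_contAt hq (inv_ne_zero (g0 x))) ((hg.pow 2).inv₀ g0).continuousAt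


lemma EE_integral {p q : ℂ} (hp : ‖p‖ < 1) (hp0 : p ≠ 0) (hq : ‖q‖ < 1) (hq0 : q ≠ 0)
    {t1 t2 t3 t4 t5 t6 : ℂ} (h1 : t1 ≠ 0) (h2 : t2 ≠ 0) (h3 : t3 ≠ 0) (h4 : t4 ≠ 0) (h5 : t5 ≠ 0)
    (h6 : t6 ≠ 0) (n1 : ‖t1‖ < 1) (n2 : ‖t2‖ < 1) (n3 : ‖t3‖ < 1) (n4 : ‖t4‖ < 1) (n5 : ‖t5‖ < 1)
    (n6 : ‖t6‖ < 1) (hprod : t1 * t2 * t3 * t4 * t5 * t6 = p * q) :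
    kappa p q * Complex.I * ∫ u in (0:ℝ)..(2 * Real.pi),
      EE p q t1 t2 t3 t4 t5 t6 (Complex.exp (u * Complex.I)) = NN p q t1 t2 t3 t4 t5 t6 := by
  have e := elliptic_beta hp hp0 hq hq0 h1 h2 h3 h4 h5 h6 n1 n2 n3 n4 n5 n6 hprod
  have hII : II p q t1 t2 t3 t4 t5 t6 = (2 * (Real.pi : ℂ))⁻¹ * ∫ u in (0:ℝ)..(2 * Real.pi),
      EE p q t1 t2 t3 t4 t5 t6 (Complex.exp (u * Complex.I)) := by
    unfold II circleAverage
    rw [Complex.real_smul]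
    simp only [circleMap, zero_add, Complex.ofReal_one, one_mul]
    push_cast
    rfl
  rw [hII] at e
  unfold kappa
  have hpi : (Real.pi : ℂ) ≠ 0 := by exact_mod_cast Real.pi_ne_zero
  revert e
  generalize (∫ u in (0:ℝ)..(2 * Real.pi),
      EE p q t1 t2 t3 t4 t5 t6 (Complex.exp (u * Complex.I))) = J
  generalize NN p q t1 t2 t3 t4 t5 t6 = N
  generalize qpoch p p = A
  generalize qpoch q q = B
  intro e
  have e2 : N = A * B * ((2 * (Real.pi : ℂ))⁻¹ * J) / 2 := by rw [e]; ring
  rw [e2]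
  field_simp
  ring

theorem integral_bailey_lemma (p q r : ℂ) (hp0 : 0 < ‖p‖) (hp1 : ‖p‖ < 1)
    (hq0 : 0 < ‖q‖) (hq1 : ‖q‖ < 1) (hr : r ^ 2 = p * q)
    (s t y w : ℂ) (hs : s ≠ 0) (ht : t ≠ 0) (hy : y ≠ 0) (hw : w ≠ 0)
    (h1 : ‖t‖ < 1) (h2 : ‖s‖ < 1)
    (h3 : ‖r * (s * t)⁻¹ * y‖ < 1) (h4 : ‖r * (s * t)⁻¹ * y⁻¹‖ < 1)
    (h5 : ‖s * w‖ < 1) (h6 : ‖s * w⁻¹‖ < 1) (h7 : ‖s * t * w‖ < 1) (h8 : ‖s * t * w⁻¹‖ < 1)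
    (α : ℂ → ℂ) (hα : ContinuousOn α (Metric.sphere (0 : ℂ) 1))
    (β : ℂ → ℂ)
    (hβ : ∀ x : ℂ, ‖x‖ = 1 →
      β x = kappa p q * ∫ u in (0:ℝ)..(2 * Real.pi),
        gamma4 p q t x (Complex.exp (u * Complex.I)) /
            (egamma (t ^ 2) p q * egamma (Complex.exp (u * Complex.I) ^ 2) p q *
              egamma ((Complex.exp (u * Complex.I) ^ 2)⁻¹) p q) *
          α (Complex.exp (u * Complex.I)) * Complex.I)
    (α' : ℂ → ℂ) (hα' : ∀ z : ℂ, α' z = Dfun p q r s y z * α z) :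
    (Dfun p q r t⁻¹ y w *
        (kappa p q * ∫ u in (0:ℝ)..(2 * Real.pi),
          gamma4 p q s w (Complex.exp (u * Complex.I)) /
              (egamma (s ^ 2) p q * egamma (Complex.exp (u * Complex.I) ^ 2) p q *
                egamma ((Complex.exp (u * Complex.I) ^ 2)⁻¹) p q) *
            Dfun p q r (s * t) y (Complex.exp (u * Complex.I)) *
            β (Complex.exp (u * Complex.I)) * Complex.I))
      = kappa p q * ∫ u in (0:ℝ)..(2 * Real.pi),
          gamma4 p q (s * t) w (Complex.exp (u * Complex.I)) /
              (egamma (s ^ 2 * t ^ 2) p q * egamma (Complex.exp (u * Complex.I) ^ 2) p q *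
                egamma ((Complex.exp (u * Complex.I) ^ 2)⁻¹) p q) *
            α' (Complex.exp (u * Complex.I)) * Complex.I := by
  have hp : p ≠ 0 := norm_pos_iff.1 hp0
  have hq : q ≠ 0 := norm_pos_iff.1 hq0
  have hr0 : r ≠ 0 := by
    rintro rfl
    have : p * q = 0 := by rw [← hr]; ring
    exact mul_ne_zero hp hq this
  have he : ∀ u : ℝ, ‖Complex.exp (u * Complex.I)‖ = 1 := fun u => Complex.norm_exp_ofReal_mul_I u
  have he0 : ∀ u : ℝ, Complex.exp (u * Complex.I) ≠ 0 := fun u => Complex.exp_ne_zero _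
  have hec : Continuous fun u : ℝ => Complex.exp (u * Complex.I) := by fun_prop
  generalize hE : (fun u : ℝ => Complex.exp (u * Complex.I)) = E at hec
  have hEu : ∀ u : ℝ, Complex.exp (u * Complex.I) = E u := fun u => by rw [← hE]
  simp only [hEu] at he he0 hβ ⊢
  have r1 : s * w ≠ 0 := mul_ne_zero hs hw
  have r2 : s * w⁻¹ ≠ 0 := mul_ne_zero hs (inv_ne_zero hw)
  have r3 : r * (s * t)⁻¹ * y ≠ 0 :=
    mul_ne_zero (mul_ne_zero hr0 (inv_ne_zero (mul_ne_zero hs ht))) hy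
  have r4 : r * (s * t)⁻¹ * y⁻¹ ≠ 0 :=
    mul_ne_zero (mul_ne_zero hr0 (inv_ne_zero (mul_ne_zero hs ht))) (inv_ne_zero hy)
  have r5 : ∀ v, t * E v ≠ 0 := fun v => mul_ne_zero ht (he0 v)
  have r6 : ∀ v, t * (E v)⁻¹ ≠ 0 := fun v => mul_ne_zero ht (inv_ne_zero (he0 v))
  have n5 : ∀ v, ‖t * E v‖ < 1 := fun v => by rw [norm_mul, he, mul_one]; exact h1
  have n6 : ∀ v, ‖t * (E v)⁻¹‖ < 1 := fun v => by
    rw [norm_mul, norm_inv, he, inv_one, mul_one]; exact h1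
  set F : ℝ → ℝ → ℂ := fun u v =>
    EE p q (s * w) (s * w⁻¹) (r * (s * t)⁻¹ * y) (r * (s * t)⁻¹ * y⁻¹) (t * E v) (t * (E v)⁻¹) (E u)
      * (WW p q (E v) * α (E v)) with hF
  have hαc : Continuous fun v => α (E v) :=
    hα.comp_continuous hec (fun v => by simp [he])
  have hFc : Continuous F.uncurry := by
    have c1 : Continuous fun x : ℝ × ℝ => E x.1 := hec.comp continuous_fst
    have c2 : Continuous fun x : ℝ × ℝ => E x.2 := hec.comp continuous_snd
    have c3 : Continuous fun x : ℝ × ℝ => (E x.2)⁻¹ := c2.inv₀ (fun x => he0 _)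
    have g1 : ∀ x : ℝ × ℝ, ‖E x.1‖ = 1 := fun x => he _
    have k : ∀ a : ℂ, a ≠ 0 → ‖a‖ < 1 → Continuous fun x : ℝ × ℝ => gg p q a (E x.1) :=
      fun a ha hn => gg_cont_comp hp1 hq1 continuous_const c1 (fun _ => ha) (fun _ => hn) g1
    have k5 : Continuous fun x : ℝ × ℝ => gg p q (t * E x.2) (E x.1) :=
      gg_cont_comp hp1 hq1 (continuous_const.mul c2) c1 (fun _ => r5 _) (fun _ => n5 _) g1
    have k6 : Continuous fun x : ℝ × ℝ => gg p q (t * (E x.2)⁻¹) (E x.1) :=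
      gg_cont_comp hp1 hq1 (continuous_const.mul c3) c1 (fun _ => r6 _) (fun _ => n6 _) g1
    have kW : Continuous fun x : ℝ × ℝ => WW p q (E x.1) := WW_cont_comp hp1 hq1 c1 g1
    have kW2 : Continuous fun x : ℝ × ℝ => WW p q (E x.2) :=
      WW_cont_comp hp1 hq1 c2 (fun x => he _)
    have kα : Continuous fun x : ℝ × ℝ => α (E x.2) := hαc.comp continuous_snd
    exact ((((((((k _ r1 h5).mul (k _ r2 h6)).mul (k _ r3 h3)).mul (k _ r4 h4)).mul k5).mul k6).mul
      kW)).mul (kW2.mul kα)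
  have hswap : ∫ u in (0:ℝ)..(2 * Real.pi), ∫ v in (0:ℝ)..(2 * Real.pi), F u v =
      ∫ v in (0:ℝ)..(2 * Real.pi), ∫ u in (0:ℝ)..(2 * Real.pi), F u v := by
    apply MeasureTheory.intervalIntegral_intervalIntegral_swap
    exact (hFc.continuousOn.integrableOn_compact
      (isCompact_uIcc.prod isCompact_uIcc)).mono_set
        (Set.prod_mono Set.uIoc_subset_uIcc Set.uIoc_subset_uIcc)
  set Gs := (egamma (s ^ 2) p q)⁻¹ with hGs
  set Gt := (egamma (t ^ 2) p q)⁻¹ with hGt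
  set κ := kappa p q with hκ
  have hL : ∀ u : ℝ, gamma4 p q s w (E u) /
              (egamma (s ^ 2) p q * egamma (E u ^ 2) p q * egamma ((E u ^ 2)⁻¹) p q) *
            Dfun p q r (s * t) y (E u) * β (E u) * Complex.I =
      (κ * Complex.I * Complex.I * Gs * Gt) * ∫ v in (0:ℝ)..(2 * Real.pi), F u v := by
    intro u
    rw [hβ _ (he u), kernel_eq hp1 hq1 hp hq (he u)]
    simp_rw [kernel_eq hp1 hq1 hp hq (he _)]
    have hre : ∀ X k J i : ℂ, X * (k * J) * i = (X * k * i) * J := fun X k J i => by ring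
    rw [hre, ← intervalIntegral.integral_const_mul,
      ← intervalIntegral.integral_const_mul]
    refine intervalIntegral.integral_congr fun v _ => ?_
    simp only [hF]
    rw [gamma4_gg, gamma4_gg', Dfun_gg]
    unfold EE
    rw [show theta p (E u ^ 2) * theta q ((E u ^ 2)⁻¹) = WW p q (E u) from rfl, ← hGs, ← hGt]
    ring
  have hR : ∀ v : ℝ, gamma4 p q (s * t) w (E v) /
              (egamma (s ^ 2 * t ^ 2) p q * egamma (E v ^ 2) p q * egamma ((E v ^ 2)⁻¹) p q) *
            α' (E v) * Complex.I =
      (Dfun p q r t⁻¹ y w * Gs * Gt * Complex.I * (κ * Complex.I)) *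
        ∫ u in (0:ℝ)..(2 * Real.pi), F u v := by
    intro v
    have e1 := NN_bailey hp1 hq1 hp hq hr hs ht hy hw (he0 v) h1 h2 h3 h4 h5 h6
    have e2 := EE_integral hp1 hp hq1 hq r1 r2 r3 r4 (r5 v) (r6 v) h5 h6 h3 h4 (n5 v) (n6 v)
      (by rw [← hr]; have := he0 v; field_simp)
    simp only [hEu] at e2
    rw [kernel_eq hp1 hq1 hp hq (he v), hα']
    simp only [hF]
    rw [intervalIntegral.integral_mul_const]
    rw [← e2, ← hGs, ← hGt, ← hκ] at e1
    linear_combination (-(WW p q (E v) * α (E v) * Complex.I)) * e1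
  simp_rw [hL, hR]
  rw [intervalIntegral.integral_const_mul, intervalIntegral.integral_const_mul, hswap]
  ring
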